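/- arXiv:1211.1811 — 5 statements merged into one kernel-verified Lean document; each statement's English description precedes it below -/
import Mathlib

section
/- Let a, b, α > 0 and β ∈ ℝ, let ψ be a smooth real function on a neighborhood of 0 with ψ(0)=b, ψ'(0)=−α, ψ''(0)=2β. Define q(x,y) := (ψ(x²)−ψ(y²))/(y²−x²) for x² ≠ y² and q(x,y) := −ψ'(x²) for x² = y², and define f(x,y) := 2ψ(y²) / ( ψ(x²) · √(ψ(x²)+ψ(y²)) · √(q(x,y)) ). Then f is smooth in a neighborhood of (0,0) and f(x,y) = √2/√(bα) + ((5α² + 2bβ)/(2√2 (bα)^{3/2})) x² + ((2bβ − 3α²)/(2√2 (bα)^{3/2})) y² + O(x⁴ + y⁴) as (x,y) → (0,0). -/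
open Set Asymptotics Filter Real

/-!
In the variables `s = x²`, `t = y²` the quotient `q` is minus the divided difference
`dslope ψ s t = ∫₀¹ ψ'(s + (t - s) u) du`. This integral is smooth in `(s, t)`, also across the
diagonal, so `f` is a smooth function `g` of `(x², y²)`, and the first-order Taylor expansion of `g`
at the origin, whose remainder is `O(s² + t²)`, is the expansion of `f` up to `O(x⁴ + y⁴)`.

The linear terms come from logarithmic differentiation of `g`. The derivative of the divided
difference at a diagonal point `(x, x)` is found without differentiating the integral: its two
partial derivatives agree by symmetry, and they add up to `ψ''(x)` because the divided difference
restricts to `ψ'` on the diagonal.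
-/

open scoped ContDiff Topology

section ParametricIntegral

section Continuity

variable {X Y F : Type*} [TopologicalSpace X] [TopologicalSpace Y] {x₀ : X}

theorem continuousOn_slice_of_continuousAt [TopologicalSpace F] {H : X × Y → F} {K : Set Y}
    (hH : ∀ y ∈ K, ContinuousAt H (x₀, y)) : ContinuousOn (fun y ↦ H (x₀, y)) K := fun y hy ↦
  ((hH y hy).comp (f := fun y ↦ (x₀, y)) (by fun_prop)).continuousWithinAt

variable [NormedAddCommGroup F]

theorem exists_eventually_forall_norm_le_of_isCompact {H : X × Y → F} {K : Set Y}
    (hK : IsCompact K) (hH : ∀ y ∈ K, ContinuousAt H (x₀, y)) :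
    ∃ C, ∀ᶠ x in 𝓝 x₀, ∀ y ∈ K, ‖H (x, y)‖ ≤ C := by
  obtain ⟨C, hC⟩ := hK.exists_bound_of_continuousOn (continuousOn_slice_of_continuousAt hH)
  refine ⟨C + 1, hK.eventually_forall_of_forall_eventually fun y hy ↦ ?_⟩
  filter_upwards [(hH y hy).norm.eventually_lt_const ((hC y hy).trans_lt (lt_add_one C))]
    with z hz using hz.le

variable {H : X × ℝ → F} {a b : ℝ}

theorem intervalIntegrable_slice_of_continuousAt (hH : ∀ t ∈ uIcc a b, ContinuousAt H (x₀, t)) :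
    IntervalIntegrable (fun t ↦ H (x₀, t)) MeasureTheory.volume a b :=
  (continuousOn_slice_of_continuousAt hH).intervalIntegrable

theorem continuousAt_intervalIntegral_of_continuousAt [FirstCountableTopology X] [NormedSpace ℝ F]
    (hH : ∀ᶠ x in 𝓝 x₀, ∀ t ∈ uIcc a b, ContinuousAt H (x, t)) :
    ContinuousAt (fun x ↦ ∫ t in a..b, H (x, t)) x₀ := by
  obtain ⟨C, hC⟩ := exists_eventually_forall_norm_le_of_isCompact isCompact_uIcc hH.self_of_nhds
  refine intervalIntegral.continuousAt_of_dominated_interval (bound := fun _ ↦ C) ?_ ?_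
    intervalIntegrable_const (.of_forall fun t ht ↦ ?_)
  · filter_upwards [hH] with x hx
      using (intervalIntegrable_slice_of_continuousAt hx).aestronglyMeasurable_restrict_uIoc
  · filter_upwards [hC] with x hx using .of_forall fun t ht ↦ hx t (uIoc_subset_uIcc ht)
  · exact (hH.self_of_nhds t (uIoc_subset_uIcc ht)).comp (f := fun x ↦ (x, t)) (by fun_prop)

end Continuity

universe u v

-- Differentiating under the integral replaces `F` by `E →L[ℝ] F`, so for the induction on the order
-- of differentiability the universe of `F` has to absorb that of `E`.
variable {E : Type u} [NormedAddCommGroup E] [NormedSpace ℝ E]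
  {F : Type (max u v)} [NormedAddCommGroup F] [NormedSpace ℝ F]
  {H : E × ℝ → F} {x₀ : E} {a b : ℝ}

theorem eventually_forall_uIcc_contDiffAt {n : WithTop ℕ∞} (hn : n ≠ ∞)
    (hH : ∀ t ∈ uIcc a b, ContDiffAt ℝ n H (x₀, t)) :
    ∀ᶠ x in 𝓝 x₀, ∀ t ∈ uIcc a b, ContDiffAt ℝ n H (x, t) :=
  isCompact_uIcc.eventually_forall_of_forall_eventually fun t ht ↦ (hH t ht).eventually hn

theorem contDiffAt_fderiv_comp_inl {m n : WithTop ℕ∞} {z : E × ℝ} (hH : ContDiffAt ℝ n H z)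
    (hmn : m + 1 ≤ n) :
    ContDiffAt ℝ m (fun z ↦ (fderiv ℝ H z).comp (.inl ℝ E ℝ)) z :=
  (hH.fderiv_right hmn).clm_comp contDiffAt_const

theorem hasFDerivAt_intervalIntegral_of_contDiffAt
    (hH : ∀ t ∈ uIcc a b, ContDiffAt ℝ 1 H (x₀, t)) :
    HasFDerivAt (fun x ↦ ∫ t in a..b, H (x, t))
      (∫ t in a..b, (fderiv ℝ H (x₀, t)).comp (.inl ℝ E ℝ)) x₀ := by
  have hH' : ∀ t ∈ uIcc a b,
      ContinuousAt (fun z ↦ (fderiv ℝ H z).comp (.inl ℝ E ℝ)) (x₀, t) := fun t ht ↦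
    (contDiffAt_fderiv_comp_inl (m := 0) (hH t ht) (by simp)).continuousAt
  have hnear := eventually_forall_uIcc_contDiffAt (by simp) hH
  obtain ⟨C, hC⟩ := exists_eventually_forall_norm_le_of_isCompact isCompact_uIcc hH'
  refine intervalIntegral.hasFDerivAt_integral_of_dominated_of_fderiv_le
    (F := fun x t ↦ H (x, t)) (F' := fun x t ↦ (fderiv ℝ H (x, t)).comp (.inl ℝ E ℝ))
    (bound := fun _ ↦ C) (hnear.and hC) ?_
    (intervalIntegrable_slice_of_continuousAt fun t ht ↦ (hH t ht).continuousAt)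
    (intervalIntegrable_slice_of_continuousAt hH').aestronglyMeasurable_restrict_uIoc
    (.of_forall fun t ht x hx ↦ hx.2 t (uIoc_subset_uIcc ht)) intervalIntegrable_const
    (.of_forall fun t ht x hx ↦ ?_)
  · filter_upwards [hnear] with x hx
    exact (intervalIntegrable_slice_of_continuousAt fun t ht ↦
      (hx t ht).continuousAt).aestronglyMeasurable_restrict_uIoc
  · have hdiff := (hx.1 t (uIoc_subset_uIcc ht)).differentiableAt one_ne_zero
    exact hdiff.hasFDerivAt.comp x (hasFDerivAt_prodMk_left x t)

theorem contDiffAt_nat_intervalIntegral (n : ℕ)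
    (hH : ∀ t ∈ uIcc a b, ContDiffAt ℝ n H (x₀, t)) :
    ContDiffAt ℝ n (fun x ↦ ∫ t in a..b, H (x, t)) x₀ := by
  induction n generalizing F with
  | zero =>
    refine contDiffAt_zero.2 ⟨_, eventually_forall_uIcc_contDiffAt (by simp) hH, fun x hx ↦ ?_⟩
    have hcont : ∀ᶠ y in 𝓝 x, ∀ t ∈ uIcc a b, ContinuousAt H (y, t) :=
      (eventually_forall_uIcc_contDiffAt (by simp) hx).mono fun y hy t ht ↦ (hy t ht).continuousAt
    exact (continuousAt_intervalIntegral_of_continuousAt hcont).continuousWithinAt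
  | succ n ih =>
    refine contDiffAt_succ_iff_hasFDerivAt.2
      ⟨fun x ↦ ∫ t in a..b, (fderiv ℝ H (x, t)).comp (.inl ℝ E ℝ),
        ⟨_, eventually_forall_uIcc_contDiffAt (by simp) hH, fun x hx ↦ ?_⟩,
        ih fun t ht ↦ contDiffAt_fderiv_comp_inl (hH t ht) (by simp)⟩
    exact hasFDerivAt_intervalIntegral_of_contDiffAt fun t ht ↦ (hx t ht).of_le (by simp)

theorem contDiffAt_intervalIntegral {n : ℕ∞}
    (hH : ∀ t ∈ uIcc a b, ContDiffAt ℝ n H (x₀, t)) :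
    ContDiffAt ℝ n (fun x ↦ ∫ t in a..b, H (x, t)) x₀ := by
  induction n using ENat.recTopCoe with
  | top =>
    exact contDiffAt_infty.2 fun m ↦
      contDiffAt_nat_intervalIntegral m fun t ht ↦ contDiffAt_infty.1 (hH t ht) m
  | coe n => exact contDiffAt_nat_intervalIntegral n hH

end ParametricIntegral

section DSlope

variable {F : Type*} [NormedAddCommGroup F] [NormedSpace ℝ F] {f : ℝ → F}

theorem dslope_comm {𝕜 E : Type*} [NontriviallyNormedField 𝕜] [NormedAddCommGroup E]
    [NormedSpace 𝕜 E] (f : 𝕜 → E) (a b : 𝕜) : dslope f a b = dslope f b a := by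
  rcases eq_or_ne a b with rfl | hab
  · rfl
  · rw [dslope_of_ne f hab.symm, dslope_of_ne f hab, slope_comm]

theorem neg_dslope_of_ne {𝕜 : Type*} [NontriviallyNormedField 𝕜] (f : 𝕜 → 𝕜) {a b : 𝕜}
    (hab : a ≠ b) : -dslope f a b = (f a - f b) / (b - a) := by
  rw [dslope_of_ne f hab.symm, slope_def_field, ← neg_div, neg_sub]

theorem image_add_sub_mul_uIcc (a b : ℝ) :
    (fun t ↦ a + (b - a) * t) '' uIcc 0 1 = uIcc a b := by
  rw [← segment_eq_uIcc a b, segment_eq_image', uIcc_of_le zero_le_one]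
  simp only [smul_eq_mul, mul_comm]

theorem forall_mem_uIcc_iff {a b : ℝ} {P : ℝ → Prop} :
    (∀ x ∈ uIcc a b, P x) ↔ ∀ t ∈ uIcc 0 1, P (a + (b - a) * t) := by
  rw [← image_add_sub_mul_uIcc, forall_mem_image]

theorem eventually_forall_uIcc_of_forall_eventually {a b : ℝ} {P : ℝ → Prop}
    (hP : ∀ x ∈ uIcc a b, ∀ᶠ y in 𝓝 x, P y) :
    ∀ᶠ p in 𝓝 (a, b), ∀ x ∈ uIcc p.1 p.2, P x := by
  have hcont : Continuous fun z : (ℝ × ℝ) × ℝ ↦ z.1.1 + (z.1.2 - z.1.1) * z.2 := by fun_prop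
  have hsegment : ∀ᶠ p in 𝓝 (a, b), ∀ t ∈ uIcc 0 1, P (p.1 + (p.2 - p.1) * t) :=
    isCompact_uIcc.eventually_forall_of_forall_eventually fun t ht ↦
      (hcont.tendsto ((a, b), t)).eventually (forall_mem_uIcc_iff.1 hP t ht)
  exact hsegment.mono fun p ↦ forall_mem_uIcc_iff.2

theorem contDiffAt_deriv {m n : WithTop ℕ∞} {x : ℝ} (hf : ContDiffAt ℝ n f x) (hmn : m + 1 ≤ n) :
    ContDiffAt ℝ m (deriv f) x :=
  (hf.fderiv_right hmn).clm_apply contDiffAt_const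

theorem dslope_eq_integral_deriv [CompleteSpace F] {a b : ℝ}
    (hf : ∀ x ∈ uIcc a b, ContDiffAt ℝ 1 f x) :
    dslope f a b = ∫ t in (0 : ℝ)..1, deriv f (a + (b - a) * t) := by
  rcases eq_or_ne b a with rfl | hab
  · simp
  · have hderiv : ContinuousOn (deriv f) (uIcc a b) := fun x hx ↦
      (contDiffAt_deriv (m := 0) (hf x hx) (by simp)).continuousAt.continuousWithinAt
    have hsub : (b - a) • ∫ t in (0 : ℝ)..1, deriv f (a + (b - a) * t) = f b - f a := by
      rw [intervalIntegral.smul_integral_comp_add_mul, mul_zero, add_zero, mul_one,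
        add_sub_cancel, intervalIntegral.integral_deriv_eq_sub
          (fun x hx ↦ (hf x hx).differentiableAt one_ne_zero) hderiv.intervalIntegrable]
    rw [dslope_of_ne f hab, slope_def_module, ← hsub, inv_smul_smul₀ (sub_ne_zero.2 hab)]

theorem contDiffAt_dslope [CompleteSpace F] {n : ℕ∞} {a b : ℝ}
    (hf : ∀ x ∈ uIcc a b, ContDiffAt ℝ (n + 1) f x) :
    ContDiffAt ℝ n (fun p : ℝ × ℝ ↦ dslope f p.1 p.2) (a, b) := by
  have hintegrand : ∀ t ∈ uIcc (0 : ℝ) 1, ContDiffAt ℝ n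
      (fun z : (ℝ × ℝ) × ℝ ↦ deriv f (z.1.1 + (z.1.2 - z.1.1) * z.2)) ((a, b), t) := fun t ht ↦
    (contDiffAt_deriv (forall_mem_uIcc_iff.1 hf t ht) le_rfl).comp
      (f := fun z : (ℝ × ℝ) × ℝ ↦ z.1.1 + (z.1.2 - z.1.1) * z.2) ((a, b), t) (by fun_prop)
  have hnear : ∀ᶠ p in 𝓝 (a, b), ∀ x ∈ uIcc p.1 p.2, ContDiffAt ℝ 1 f x :=
    eventually_forall_uIcc_of_forall_eventually fun x hx ↦
      ((hf x hx).of_le (by simp)).eventually (by simp)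
  refine (contDiffAt_intervalIntegral hintegrand).congr_of_eventuallyEq ?_
  filter_upwards [hnear] with p hp using dslope_eq_integral_deriv hp

theorem hasFDerivAt_dslope_self [CompleteSpace F] {x : ℝ} (hf : ContDiffAt ℝ 2 f x) :
    HasFDerivAt (fun p : ℝ × ℝ ↦ dslope f p.1 p.2)
      ((ContinuousLinearMap.fst ℝ ℝ ℝ + ContinuousLinearMap.snd ℝ ℝ ℝ).smulRight
        ((2⁻¹ : ℝ) • deriv (deriv f) x)) (x, x) := by
  have hdiff : DifferentiableAt ℝ (fun p : ℝ × ℝ ↦ dslope f p.1 p.2) (x, x) :=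
    (contDiffAt_dslope (n := 1) (by simpa [one_add_one_eq_two] using hf)).differentiableAt
      one_ne_zero
  set L := fderiv ℝ (fun p : ℝ × ℝ ↦ dslope f p.1 p.2) (x, x)
  have hL : HasFDerivAt (fun p : ℝ × ℝ ↦ dslope f p.1 p.2) L (x, x) := hdiff.hasFDerivAt
  have hsymm : L (1, 0) = L (0, 1) := by
    have hswap := hL.comp (f := Prod.swap) (x, x) (ContinuousLinearEquiv.prodComm ℝ ℝ ℝ).hasFDerivAt
    have hcomp : (fun p : ℝ × ℝ ↦ dslope f p.1 p.2) ∘ Prod.swap = fun p ↦ dslope f p.1 p.2 :=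
      funext fun p ↦ dslope_comm f p.2 p.1
    rw [hcomp] at hswap
    simpa using DFunLike.congr_fun (hL.unique hswap) (1, 0)
  have hdiag : L (1, 1) = deriv (deriv f) x := by
    have hline := hL.comp_hasDerivAt_of_eq x ((hasDerivAt_id x).prodMk (hasDerivAt_id x)) rfl
    have hcomp : (fun p : ℝ × ℝ ↦ dslope f p.1 p.2) ∘ (fun s ↦ (id s, id s)) = deriv f :=
      funext fun s ↦ dslope_same f s
    rw [hcomp] at hline
    exact hline.deriv.symm
  have hsum : L (1, 1) = L (1, 0) + L (0, 1) := by rw [← map_add]; simp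
  have hhalf : L (0, 1) = (2⁻¹ : ℝ) • deriv (deriv f) x := by
    rw [← hdiag, hsum, hsymm, ← two_smul ℝ, inv_smul_smul₀ two_ne_zero]
  convert hL using 1
  ext <;> simp [hsymm, hhalf]

end DSlope

section Taylor

variable {𝕜 E F : Type*} [RCLike 𝕜] [NormedAddCommGroup E] [NormedSpace ℝ E] [NormedSpace 𝕜 E]
  [NormedAddCommGroup F] [NormedSpace 𝕜 F]

theorem isBigO_sub_sub_fderiv_norm_sq {f : E → F} {x : E} (hf : ContDiffAt 𝕜 2 f x) :
    (fun y ↦ f y - f x - fderiv 𝕜 f x (y - x)) =O[𝓝 x] fun y ↦ ‖y - x‖ ^ 2 := by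
  obtain ⟨K, t, ht, hK⟩ :=
    (hf.fderiv_right (m := 1) one_add_one_eq_two.le).exists_lipschitzOnWith
  have hdiff : ∀ᶠ y in 𝓝 x, DifferentiableAt 𝕜 f y :=
    (hf.eventually (by simp)).mono fun y hy ↦ hy.differentiableAt two_ne_zero
  obtain ⟨r, hr, hball⟩ := Metric.mem_nhds_iff.1 (inter_mem ht hdiff)
  refine .of_bound K ?_
  filter_upwards [Metric.ball_mem_nhds x hr] with y hy
  have hsub : Metric.closedBall x ‖y - x‖ ⊆ Metric.ball x r :=
    Metric.closedBall_subset_ball (mem_ball_iff_norm.1 hy)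
  have hfderiv : ∀ z ∈ Metric.closedBall x ‖y - x‖,
      ‖fderiv 𝕜 f z - fderiv 𝕜 f x‖ ≤ K * ‖y - x‖ := fun z hz ↦
    (hK.norm_sub_le (hball (hsub hz)).1 (mem_of_mem_nhds ht)).trans <| by
      gcongr
      exact mem_closedBall_iff_norm.1 hz
  calc ‖f y - f x - fderiv 𝕜 f x (y - x)‖ ≤ K * ‖y - x‖ * ‖y - x‖ :=
        (convex_closedBall x ‖y - x‖).norm_image_sub_le_of_norm_hasFDerivWithin_le'
          (fun z hz ↦ (hball (hsub hz)).2.hasFDerivAt.hasFDerivWithinAt) hfderiv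
          (by simp) (mem_closedBall_iff_norm.2 le_rfl)
    _ = K * ‖‖y - x‖ ^ 2‖ := by rw [norm_pow, norm_norm]; ring

end Taylor

section CompSq

variable {G : Type*} [NormedAddCommGroup G] [NormedSpace ℝ G] {g : ℝ × ℝ → G}

theorem tendsto_sq_sq_nhds_zero :
    Tendsto (fun p : ℝ × ℝ ↦ (p.1 ^ 2, p.2 ^ 2)) (𝓝 0) (𝓝 0) := by
  have hcont : Continuous fun p : ℝ × ℝ ↦ (p.1 ^ 2, p.2 ^ 2) := by fun_prop
  exact hcont.tendsto' 0 0 (by simp)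

theorem eventually_contDiffAt_comp_sq {n : WithTop ℕ∞} (hg : ∀ᶠ z in 𝓝 0, ContDiffAt ℝ n g z) :
    ∀ᶠ p in 𝓝 0, ContDiffAt ℝ n (fun p : ℝ × ℝ ↦ g (p.1 ^ 2, p.2 ^ 2)) p := by
  filter_upwards [tendsto_sq_sq_nhds_zero.eventually hg] with p hp
  exact hp.comp (f := fun p : ℝ × ℝ ↦ (p.1 ^ 2, p.2 ^ 2)) p (by fun_prop)

theorem isBigO_comp_sq_sub_sub_fderiv (hg : ContDiffAt ℝ 2 g 0) :
    (fun p : ℝ × ℝ ↦ g (p.1 ^ 2, p.2 ^ 2) - g 0 - fderiv ℝ g 0 (p.1 ^ 2, p.2 ^ 2))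
      =O[𝓝 0] fun p ↦ p.1 ^ 4 + p.2 ^ 4 := by
  have htaylor := (isBigO_sub_sub_fderiv_norm_sq hg).comp_tendsto tendsto_sq_sq_nhds_zero
  simp only [Function.comp_def, sub_zero] at htaylor
  refine htaylor.trans (.of_norm_le fun p ↦ ?_)
  rw [norm_pow, norm_norm, Prod.norm_mk, norm_of_nonneg (sq_nonneg _), norm_of_nonneg (sq_nonneg _)]
  rcases max_choice (p.1 ^ 2) (p.2 ^ 2) with h | h <;> rw [h] <;>
    nlinarith [pow_nonneg (sq_nonneg p.1) 2, pow_nonneg (sq_nonneg p.2) 2]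

end CompSq

section Integrand

/-- The integrand `f` in the variables `z = (x², y²)`. The divided difference `-q` is Mathlib's
`dslope`, which equals `deriv ψ` on the diagonal. -/
noncomputable def reducedIntegrand (ψ : ℝ → ℝ) (z : ℝ × ℝ) : ℝ :=
  2 * ψ z.2 / (ψ z.1 * √(ψ z.1 + ψ z.2) * √(-dslope ψ z.1 z.2))

theorem reducedIntegrand_self {ψ : ℝ → ℝ} {x : ℝ} (hpos : 0 < ψ x) :
    reducedIntegrand ψ (x, x) = √2 / √(ψ x * -deriv ψ x) := by
  rw [reducedIntegrand, dslope_same, ← two_mul, sqrt_mul zero_le_two, sqrt_mul hpos.le]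
  calc 2 * ψ x / (ψ x * (√2 * √(ψ x)) * √(-deriv ψ x))
      = 2 / √2 * (ψ x / ψ x) / (√(ψ x) * √(-deriv ψ x)) := by ring
    _ = √2 / (√(ψ x) * √(-deriv ψ x)) := by rw [div_sqrt, div_self hpos.ne', mul_one]

theorem contDiffAt_reducedIntegrand {ψ : ℝ → ℝ} {n : ℕ∞} {s t : ℝ}
    (hψ : ∀ x ∈ uIcc s t, ContDiffAt ℝ (n + 1) ψ x)
    (hs : 0 < ψ s) (ht : 0 < ψ t) (hslope : dslope ψ s t < 0) :
    ContDiffAt ℝ n (reducedIntegrand ψ) (s, t) := by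
  have hfst : ContDiffAt ℝ n (fun z : ℝ × ℝ ↦ ψ z.1) (s, t) :=
    ((hψ s left_mem_uIcc).of_le le_self_add).comp (s, t) contDiffAt_fst
  have hsnd : ContDiffAt ℝ n (fun z : ℝ × ℝ ↦ ψ z.2) (s, t) :=
    ((hψ t right_mem_uIcc).of_le le_self_add).comp (s, t) contDiffAt_snd
  have hneg : 0 < -dslope ψ s t := neg_pos.2 hslope
  exact (contDiffAt_const.mul hsnd).div ((hfst.mul ((hfst.add hsnd).sqrt (by positivity))).mul
    ((contDiffAt_dslope hψ).neg.sqrt hneg.ne')) (by positivity)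

theorem eventually_contDiffAt_reducedIntegrand {ψ : ℝ → ℝ} {x : ℝ}
    (hψ : ∀ᶠ s in 𝓝 x, ContDiffAt ℝ ∞ ψ s) (hpos : 0 < ψ x) (hderiv : deriv ψ x < 0) :
    ∀ᶠ z in 𝓝 (x, x), ContDiffAt ℝ ∞ (reducedIntegrand ψ) z := by
  have hsegment : ∀ᶠ z in 𝓝 (x, x), ∀ s ∈ uIcc z.1 z.2, ContDiffAt ℝ ∞ ψ s :=
    eventually_forall_uIcc_of_forall_eventually (by simpa using hψ)
  have hψpos : ∀ᶠ s in 𝓝 x, 0 < ψ s := hψ.self_of_nhds.continuousAt.eventually_const_lt hpos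
  have hslope : ∀ᶠ z in 𝓝 (x, x), dslope ψ z.1 z.2 < 0 :=
    (contDiffAt_dslope (n := ⊤) (by simpa using hψ.self_of_nhds)).continuousAt.eventually_lt_const
      (by simpa using hderiv)
  filter_upwards [hsegment, hψpos.prod_nhds hψpos, hslope] with z hz hzpos hzslope
    using contDiffAt_reducedIntegrand hz hzpos.1 hzpos.2 hzslope

theorem hasFDerivAt_two_mul_div_mul_sqrt_mul_sqrt {E : Type*} [NormedAddCommGroup E]
    [NormedSpace ℝ E] {u v w : E → ℝ} {u' v' w' : StrongDual ℝ E} {z : E}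
    (hu : HasFDerivAt u u' z) (hv : HasFDerivAt v v' z) (hw : HasFDerivAt w w' z)
    (huz : 0 < u z) (hvz : 0 < v z) (hwz : 0 < w z) :
    HasFDerivAt (fun y ↦ 2 * v y / (u y * √(u y + v y) * √(w y)))
      ((2 * v z / (u z * √(u z + v z) * √(w z))) • ((v z)⁻¹ • v' - (u z)⁻¹ • u' -
        (2 * (u z + v z))⁻¹ • (u' + v') - (2 * w z)⁻¹ • w')) z := by
  have hsum : 0 < u z + v z := by positivity
  have hden := (hu.fun_mul ((hu.fun_add hv).sqrt hsum.ne')).fun_mul (hw.sqrt hwz.ne')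
  have hinv := (hasDerivAt_inv (by positivity)).comp_hasFDerivAt z hden
  refine ((hv.const_mul 2).fun_mul hinv).congr_fderiv ?_
  ext y
  have hsum_sq := sq_sqrt hsum.le
  have hw_sq := sq_sqrt hwz.le
  simp only [Function.comp_apply, add_apply, sub_apply, smul_apply, smul_eq_mul]
  field_simp
  rw [hsum_sq, hw_sq]
  field_simp
  ring

theorem sqrt_two_div_sqrt_mul_div {c : ℝ} (hc : 0 < c) (k : ℝ) :
    √2 / √c * (k / (4 * c)) = k / (2 * √2 * c ^ ((3 : ℝ) / 2)) := by
  have hpow : c ^ ((3 : ℝ) / 2) = c * √c := by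
    rw [sqrt_eq_rpow, ← rpow_one_add' hc.le (by norm_num)]
    norm_num
  rw [hpow]
  field_simp
  rw [sq_sqrt zero_le_two]
  ring

theorem hasFDerivAt_reducedIntegrand_self {ψ : ℝ → ℝ} {x : ℝ} (hψ : ContDiffAt ℝ 2 ψ x)
    (hpos : 0 < ψ x) (hderiv : deriv ψ x < 0) :
    HasFDerivAt (reducedIntegrand ψ)
      (((5 * deriv ψ x ^ 2 + ψ x * deriv (deriv ψ) x) /
          (2 * √2 * (ψ x * -deriv ψ x) ^ ((3 : ℝ) / 2))) • .fst ℝ ℝ ℝ +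
        ((ψ x * deriv (deriv ψ) x - 3 * deriv ψ x ^ 2) /
          (2 * √2 * (ψ x * -deriv ψ x) ^ ((3 : ℝ) / 2))) • .snd ℝ ℝ ℝ) (x, x) := by
  have hneg : 0 < -deriv ψ x := neg_pos.2 hderiv
  have hψx : HasDerivAt ψ (deriv ψ x) x := (hψ.differentiableAt two_ne_zero).hasDerivAt
  have hfst : HasFDerivAt (fun z : ℝ × ℝ ↦ ψ z.1) (deriv ψ x • .fst ℝ ℝ ℝ) (x, x) :=
    hψx.comp_hasFDerivAt_of_eq (x, x) hasFDerivAt_fst rfl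
  have hsnd : HasFDerivAt (fun z : ℝ × ℝ ↦ ψ z.2) (deriv ψ x • .snd ℝ ℝ ℝ) (x, x) :=
    hψx.comp_hasFDerivAt_of_eq (x, x) hasFDerivAt_snd rfl
  have hreduced := hasFDerivAt_two_mul_div_mul_sqrt_mul_sqrt hfst hsnd
    (hasFDerivAt_dslope_self hψ).fun_neg hpos hpos (by simpa using hderiv)
  have hvalue : 2 * ψ x / (ψ x * √(ψ x + ψ x) * √(-dslope ψ x x)) = √2 / √(ψ x * -deriv ψ x) :=
    reducedIntegrand_self hpos
  refine hreduced.congr_fderiv ?_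
  rw [hvalue, ← sqrt_two_div_sqrt_mul_div (by positivity),
    ← sqrt_two_div_sqrt_mul_div (by positivity), mul_smul, mul_smul,
    ← smul_add (√2 / √(ψ x * -deriv ψ x))]
  congr 1
  refine ContinuousLinearMap.ext fun z ↦ ?_
  simp only [dslope_same, add_apply, sub_apply, neg_apply, smul_apply, smul_eq_mul,
    ContinuousLinearMap.smulRight_apply, ContinuousLinearMap.coe_fst', ContinuousLinearMap.coe_snd']
  field_simp
  ring

end Integrand

/-- The integrand appearing in the angle function is smooth near the origin and has the
expansion `f(x,y) = √2/√(bα) + ((5α²+2bβ)/(2√2 (bα)^{3/2})) x²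
+ ((2bβ−3α²)/(2√2 (bα)^{3/2})) y² + O(x⁴+y⁴)`. -/
theorem integrand_expansion
    (a b α : ℝ) (ha : 0 < a) (hb : 0 < b) (hα : 0 < α) (β : ℝ)
    (ψ : ℝ → ℝ) (δ : ℝ) (hδ : 0 < δ) (hψ : ContDiffOn ℝ (⊤ : ℕ∞) ψ (Ioo (-δ) δ))
    (hψ0 : ψ 0 = b) (hψ1 : deriv ψ 0 = -α) (hψ2 : deriv (deriv ψ) 0 = 2 * β)
    (q : ℝ × ℝ → ℝ)
    (hq_off : ∀ x y : ℝ, x ^ 2 ≠ y ^ 2 → q (x, y) = (ψ (x ^ 2) - ψ (y ^ 2)) / (y ^ 2 - x ^ 2))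
    (hq_diag : ∀ x y : ℝ, x ^ 2 = y ^ 2 → q (x, y) = -(deriv ψ (x ^ 2)))
    (f : ℝ × ℝ → ℝ)
    (hf : ∀ x y : ℝ, f (x, y) =
      2 * ψ (y ^ 2) / (ψ (x ^ 2) * Real.sqrt (ψ (x ^ 2) + ψ (y ^ 2)) * Real.sqrt (q (x, y)))) :
    (∃ U ∈ nhds ((0 : ℝ), (0 : ℝ)), ContDiffOn ℝ (⊤ : ℕ∞) f U) ∧
      (fun p : ℝ × ℝ => f p -
          (Real.sqrt 2 / Real.sqrt (b * α) +
            (5 * α ^ 2 + 2 * b * β) / (2 * Real.sqrt 2 * (b * α) ^ ((3:ℝ)/2)) * p.1 ^ 2 +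
            (2 * b * β - 3 * α ^ 2) / (2 * Real.sqrt 2 * (b * α) ^ ((3:ℝ)/2)) * p.2 ^ 2))
        =O[nhds (0, 0)] (fun p : ℝ × ℝ => p.1 ^ 4 + p.2 ^ 4) := by
  have hq : ∀ x y, q (x, y) = -dslope ψ (x ^ 2) (y ^ 2) := fun x y ↦ by
    rcases eq_or_ne (x ^ 2) (y ^ 2) with hxy | hxy
    · rw [hq_diag x y hxy, ← hxy, dslope_same]
    · rw [hq_off x y hxy, neg_dslope_of_ne ψ hxy]
  obtain rfl : f = fun p ↦ reducedIntegrand ψ (p.1 ^ 2, p.2 ^ 2) :=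
    funext fun p ↦ by rw [hf, hq, reducedIntegrand]
  have hψ_near : ∀ᶠ s in 𝓝 0, ContDiffAt ℝ ∞ ψ s :=
    (eventually_mem_nhds_iff.2 (Ioo_mem_nhds (neg_lt_zero.2 hδ) hδ)).mono fun s ↦ hψ.contDiffAt
  have hpos : 0 < ψ 0 := hψ0 ▸ hb
  have hderiv : deriv ψ 0 < 0 := hψ1 ▸ neg_lt_zero.2 hα
  have hsmooth := eventually_contDiffAt_reducedIntegrand hψ_near hpos hderiv
  constructor
  · exact ⟨_, eventually_contDiffAt_comp_sq hsmooth,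
      fun p hp ↦ (mem_ofPred.1 hp).contDiffWithinAt⟩
  · have htaylor := isBigO_comp_sq_sub_sub_fderiv (contDiffAt_infty.1 hsmooth.self_of_nhds 2)
    have hfderiv := hasFDerivAt_reducedIntegrand_self
      (contDiffAt_infty.1 hψ_near.self_of_nhds 2) hpos hderiv
    refine htaylor.congr_left fun p ↦ ?_
    rw [← Prod.mk_zero_zero, hfderiv.fderiv, reducedIntegrand_self hpos, hψ0, hψ1, hψ2]
    simp only [neg_neg, neg_sq, add_apply, smul_apply, smul_eq_mul, ContinuousLinearMap.coe_fst',
      ContinuousLinearMap.coe_snd']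
    ring
end

section
/- Let 0 < c ≤ b and define F(ν) := ∫_ν^b √( (b²−c²)/b² + c²/(b²−t²) ) dt for ν ∈ (0,b) (the integral converges since the integrand is O(1/√(b−t)) as t → b⁻). Then, as ν → b⁻, setting Z := √(b−ν), one has F(ν) = (√2·c/√b)·Z + ((4b² − 3c²)/(6√2 · b^{3/2} · c))·Z³ + O(Z⁵). -/
open Set Asymptotics Filter Real

/-!
Measured by the distance `s = b - t` to the equatorial radius, the squared integrand has a simple
pole: it is `A² / s + 2 A B + O(s)` with `A² = c² / (2 b)` and `2 A B = (4 b² - 3 c²) / (4 b²)`.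
Comparing squares, the integrand is `A s^(-1/2) + B s^(1/2) + O(s^(3/2))`, and integrating this
expansion term by term over `(0, b - ν)` gives `2 A Z + (2/3) B Z³ + O(Z⁵)`.
-/

open MeasureTheory
open scoped Topology

section IntegralNearZero

variable {E : Type*} [NormedAddCommGroup E]

lemma isBigO_integral_rpow_add_one [NormedSpace ℝ E] {f : ℝ → E} {q : ℝ} (hq : -1 < q)
    (hf : f =O[𝓝[>] 0] fun s => s ^ q) :
    (fun d => ∫ s in 0..d, f s) =O[𝓝[>] 0] fun d => d ^ (q + 1) := by
  obtain ⟨C, hC⟩ := hf.bound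
  obtain ⟨δ, hδ, hbound⟩ := mem_nhdsGT_iff_exists_Ioc_subset.1 hC
  refine .of_bound (C / (q + 1)) ?_
  filter_upwards [Ioc_mem_nhdsGT hδ] with d ⟨hd, hdδ⟩
  have hpow : IntervalIntegrable (fun s => C * s ^ q) volume 0 d :=
    (intervalIntegral.intervalIntegrable_rpow' hq).const_mul C
  calc ‖∫ s in 0..d, f s‖
      ≤ ∫ s in 0..d, C * s ^ q := by
        refine intervalIntegral.norm_integral_le_of_norm_le hd.le (.of_forall fun s hs => ?_) hpow
        simpa [abs_of_pos (rpow_pos_of_pos hs.1 q)] using hbound ⟨hs.1, hs.2.trans hdδ⟩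
    _ = C / (q + 1) * ‖d ^ (q + 1)‖ := by
        rw [intervalIntegral.integral_const_mul, integral_rpow (.inl hq),
          zero_rpow (by linarith), sub_zero, norm_of_nonneg (rpow_nonneg hd.le _)]
        ring

lemma integral_mul_rpow_add_mul_rpow {p q : ℝ} (hp : -1 < p) (hq : -1 < q) (A B d : ℝ) :
    ∫ s in 0..d, (A * s ^ p + B * s ^ q) =
      A / (p + 1) * d ^ (p + 1) + B / (q + 1) * d ^ (q + 1) := by
  rw [intervalIntegral.integral_add
      ((intervalIntegral.intervalIntegrable_rpow' hp).const_mul A)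
      ((intervalIntegral.intervalIntegrable_rpow' hq).const_mul B),
    intervalIntegral.integral_const_mul, intervalIntegral.integral_const_mul,
    integral_rpow (.inl hp), integral_rpow (.inl hq),
    zero_rpow (by linarith), zero_rpow (by linarith)]
  ring

lemma integrableAtFilter_rpow {q : ℝ} (hq : -1 < q) :
    IntegrableAtFilter (fun s : ℝ => s ^ q) (𝓝[>] 0) :=
  ⟨Ioc 0 1, Ioc_mem_nhdsGT one_pos,
    (intervalIntegrable_iff_integrableOn_Ioc_of_le zero_le_one).1
      (intervalIntegral.intervalIntegrable_rpow' hq)⟩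

lemma eventually_intervalIntegrable_of_integrableAtFilter {f : ℝ → E} {a : ℝ} {μ : Measure ℝ}
    (hf : IntegrableAtFilter f (𝓝[>] a) μ) :
    ∀ᶠ d in 𝓝[>] a, IntervalIntegrable f μ a d := by
  obtain ⟨s, hs, hfs⟩ := hf
  obtain ⟨δ, hδ, hsub⟩ := mem_nhdsGT_iff_exists_Ioc_subset.1 hs
  filter_upwards [Ioc_mem_nhdsGT hδ] with d ⟨hd, hdδ⟩
  rw [intervalIntegrable_iff_integrableOn_Ioc_of_le hd.le]
  exact hfs.mono_set ((Ioc_subset_Ioc_right hdδ).trans hsub)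

lemma isBigO_integral_sub_integral [NormedSpace ℝ E] {f g : ℝ → E} {q : ℝ} (hq : -1 < q)
    (hf : IntegrableAtFilter f (𝓝[>] 0)) (hg : IntegrableAtFilter g (𝓝[>] 0))
    (hfg : (fun s => f s - g s) =O[𝓝[>] 0] fun s => s ^ q) :
    (fun d => (∫ s in 0..d, f s) - ∫ s in 0..d, g s) =O[𝓝[>] 0] fun d => d ^ (q + 1) := by
  refine (isBigO_integral_rpow_add_one hq hfg).congr' ?_ .rfl
  filter_upwards [eventually_intervalIntegrable_of_integrableAtFilter hf,
    eventually_intervalIntegrable_of_integrableAtFilter hg] with d hfd hgd using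
    intervalIntegral.integral_sub hfd hgd

end IntegralNearZero

lemma abs_sqrt_sub_le_div {x y : ℝ} (hy : 0 < y) : |√x - y| ≤ |x - y ^ 2| / y := by
  rw [le_div_iff₀ hy]
  rcases le_total 0 x with hx | hx
  · calc |√x - y| * y ≤ |√x - y| * |√x + y| := by
          gcongr
          exact (le_add_of_nonneg_left (sqrt_nonneg x)).trans (le_abs_self _)
      _ = |x - y ^ 2| := by
          rw [← abs_mul]
          congr 1
          linear_combination sq_sqrt hx
  · rw [sqrt_eq_zero_of_nonpos hx, zero_sub, abs_neg, abs_of_pos hy, abs_sub_comm]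
    exact (by linarith : y * y ≤ y ^ 2 - x).trans (le_abs_self _)

lemma isBigO_sqrt_sub {α : Type*} {l : Filter α} {f g : α → ℝ} (hg : ∀ᶠ x in l, 0 < g x) :
    (fun x => √(f x) - g x) =O[l] fun x => (f x - g x ^ 2) / g x := by
  refine .of_bound' ?_
  filter_upwards [hg] with x hx
  simpa only [norm_div, norm_eq_abs, abs_of_pos hx] using abs_sqrt_sub_le_div hx

lemma mul_rpow_add_mul_rpow_eq_div_sqrt {s : ℝ} (hs : 0 < s) (A B : ℝ) :
    A * s ^ (-1 / 2 : ℝ) + B * s ^ (1 / 2 : ℝ) = (A + B * s) / √s := by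
  rw [neg_div, rpow_neg hs.le, ← sqrt_eq_rpow]
  field_simp
  rw [sq_sqrt hs.le, mul_comm s]

section SqrtOfSimplePole

variable {f : ℝ → ℝ} {A B : ℝ}

lemma isBigO_sqrt_sub_div_sqrt (hA : 0 < A)
    (hf : (fun s => f s - (A ^ 2 / s + 2 * A * B)) =O[𝓝[>] 0] fun s => s) :
    (fun s => √(f s) - (A + B * s) / √s) =O[𝓝[>] 0] fun s => s * √s := by
  have hlim : Tendsto (fun s => A + B * s) (𝓝[>] 0) (𝓝 A) :=
    (Continuous.tendsto' (by fun_prop) 0 A (by simp)).mono_left nhdsWithin_le_nhds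
  have hpos : ∀ᶠ s in 𝓝[>] 0, 0 < (A + B * s) / √s := by
    filter_upwards [hlim.eventually_const_lt hA, self_mem_nhdsWithin] with s hs hs0
      using div_pos hs (sqrt_pos.2 hs0)
  have hsquare : (fun s => f s - ((A + B * s) / √s) ^ 2) =O[𝓝[>] 0] fun s => s := by
    refine (hf.sub ((isBigO_refl _ _).const_mul_left (B ^ 2))).congr' ?_ .rfl
    filter_upwards [self_mem_nhdsWithin] with s (hs : 0 < s)
    rw [div_pow, sq_sqrt hs.le]
    field_simp
    ring
  have hinv : (fun s => ((A + B * s) / √s)⁻¹) =O[𝓝[>] 0] fun s => √s := by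
    simpa only [inv_div, ← div_eq_mul_inv, mul_one] using
      (isBigO_refl (fun s => √s) (𝓝[>] 0)).mul ((hlim.inv₀ hA.ne').isBigO_one ℝ)
  exact (isBigO_sqrt_sub hpos).trans (by simpa only [div_eq_mul_inv] using hsquare.mul hinv)

lemma isBigO_sqrt_sub_rpow (hA : 0 < A)
    (hf : (fun s => f s - (A ^ 2 / s + 2 * A * B)) =O[𝓝[>] 0] fun s => s) :
    (fun s => √(f s) - (A * s ^ (-1 / 2 : ℝ) + B * s ^ (1 / 2 : ℝ)))
      =O[𝓝[>] 0] fun s => s ^ (3 / 2 : ℝ) := by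
  refine (isBigO_sqrt_sub_div_sqrt hA hf).congr' ?_ ?_
  · filter_upwards [self_mem_nhdsWithin] with s hs
    rw [mul_rpow_add_mul_rpow_eq_div_sqrt hs]
  · filter_upwards [self_mem_nhdsWithin] with s (hs : 0 < s)
    rw [sqrt_eq_rpow, ← rpow_one_add' hs.le (by norm_num)]
    norm_num

lemma isBigO_integral_sqrt_sub (hA : 0 < A) (hfm : Measurable f)
    (hf : (fun s => f s - (A ^ 2 / s + 2 * A * B)) =O[𝓝[>] 0] fun s => s) :
    (fun d => (∫ s in 0..d, √(f s)) - (2 * A * √d + 2 / 3 * B * √d ^ 3))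
      =O[𝓝[>] 0] fun d => √d ^ 5 := by
  have hdiff := isBigO_sqrt_sub_rpow hA hf
  have hmodel : IntegrableAtFilter
      (fun s : ℝ => A * s ^ (-1 / 2 : ℝ) + B * s ^ (1 / 2 : ℝ)) (𝓝[>] 0) :=
    ((integrableAtFilter_rpow (by norm_num)).smul A).add
      ((integrableAtFilter_rpow (by norm_num)).smul B)
  have hsqrt : IntegrableAtFilter (fun s => √(f s)) (𝓝[>] 0) := by
    have hmeas : Measurable
        fun s => √(f s) - (A * s ^ (-1 / 2 : ℝ) + B * s ^ (1 / 2 : ℝ)) := by fun_prop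
    simpa [Pi.add_def] using (hdiff.integrableAtFilter
      hmeas.stronglyMeasurable.stronglyMeasurableAtFilter
      (integrableAtFilter_rpow (by norm_num))).add hmodel
  refine (isBigO_integral_sub_integral (by norm_num) hsqrt hmodel hdiff).congr' ?_ ?_
  · filter_upwards [self_mem_nhdsWithin] with d (hd : 0 < d)
    have hcube : d ^ (3 / 2 : ℝ) = √d ^ 3 := by
      rw [rpow_div_two_eq_sqrt 3 hd.le, rpow_ofNat]
    rw [integral_mul_rpow_add_mul_rpow (by norm_num) (by norm_num), ← hcube, sqrt_eq_rpow]
    ring_nf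
  · filter_upwards [self_mem_nhdsWithin] with d (hd : 0 < d)
    rw [show (3 / 2 + 1 : ℝ) = 5 / 2 by norm_num, rpow_div_two_eq_sqrt 5 hd.le, rpow_ofNat]

end SqrtOfSimplePole

lemma tendsto_const_sub_nhdsLT {G : Type*} [AddCommGroup G] [PartialOrder G] [IsOrderedAddMonoid G]
    [TopologicalSpace G] [ContinuousSub G] (b : G) :
    Tendsto (fun x => b - x) (𝓝[<] b) (𝓝[>] 0) :=
  tendsto_nhdsWithin_iff.2
    ⟨(Continuous.tendsto' (by fun_prop) b 0 (sub_self b)).mono_left nhdsWithin_le_nhds,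
      eventually_mem_nhdsWithin.mono fun _ hx => sub_pos.2 (mem_Iio.1 hx)⟩

lemma isBigO_div_sq_sub_sq {b : ℝ} (hb : b ≠ 0) (m : ℝ) :
    (fun s => m / (b ^ 2 - (b - s) ^ 2) - (m / (2 * b) / s + m / (4 * b ^ 2)))
      =O[𝓝[≠] 0] fun s => s := by
  have hquotient : (fun s => m / (4 * b ^ 2 * (2 * b - s))) =O[𝓝[≠] 0] fun _ => (1 : ℝ) := by
    have hcont : ContinuousAt (fun s => m / (4 * b ^ 2 * (2 * b - s))) 0 := by
      fun_prop (disch := simp [hb])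
    exact (hcont.tendsto.mono_left nhdsWithin_le_nhds).isBigO_one ℝ
  have hne : ∀ᶠ s in 𝓝[≠] (0 : ℝ), 2 * b - s ≠ 0 :=
    nhdsWithin_le_nhds <| ContinuousAt.eventually_ne (by fun_prop) (by simp [hb])
  refine (hquotient.mul (isBigO_refl (fun s => s) _)).congr' ?_ (by simp)
  filter_upwards [hne, self_mem_nhdsWithin] with s hs (hs0 : s ≠ 0)
  rw [show b ^ 2 - (b - s) ^ 2 = s * (2 * b - s) by ring]
  set u := 2 * b - s with hu
  field_simp
  rw [hu]
  ring

lemma isBigO_integral_sqrt_add_div_sq_sub_sq {A B b k m : ℝ} (hb : b ≠ 0) (hA : 0 < A)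
    (hA_sq : A ^ 2 = m / (2 * b)) (hAB : 2 * A * B = k + m / (4 * b ^ 2)) :
    (fun ν => (∫ t in ν..b, √(k + m / (b ^ 2 - t ^ 2))) -
        (2 * A * √(b - ν) + 2 / 3 * B * √(b - ν) ^ 3))
      =O[𝓝[<] b] fun ν => √(b - ν) ^ 5 := by
  have hradicand : (fun s => k + m / (b ^ 2 - (b - s) ^ 2) - (A ^ 2 / s + 2 * A * B))
      =O[𝓝[>] 0] fun s => s :=
    ((isBigO_div_sq_sub_sq hb m).mono (nhdsGT_le_nhdsNE 0)).congr_left fun s => by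
      rw [hA_sq, hAB]
      ring
  have hsubst : ∀ ν, ∫ s in 0..b - ν, √(k + m / (b ^ 2 - (b - s) ^ 2)) =
      ∫ t in ν..b, √(k + m / (b ^ 2 - t ^ 2)) := fun ν => by
    rw [intervalIntegral.integral_comp_sub_left (fun t => √(k + m / (b ^ 2 - t ^ 2))) b,
      sub_zero, sub_sub_cancel]
  simpa only [Function.comp_def, hsubst] using
    (isBigO_integral_sqrt_sub hA (by fun_prop) hradicand).comp_tendsto (tendsto_const_sub_nhdsLT b)

theorem ellipsoid_arclength_expansion_general {b c : ℝ} (hb : 0 < b) (hc : 0 < c) {F : ℝ → ℝ}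
    (hF : ∀ᶠ ν in 𝓝[<] b,
      F ν = ∫ t in ν..b, √((b ^ 2 - c ^ 2) / b ^ 2 + c ^ 2 / (b ^ 2 - t ^ 2))) :
    (fun ν => F ν -
        (√2 * c / √b * √(b - ν) +
          (4 * b ^ 2 - 3 * c ^ 2) / (6 * √2 * b ^ ((3 : ℝ) / 2) * c) * √(b - ν) ^ 3))
      =O[𝓝[<] b] fun ν => √(b - ν) ^ 5 := by
  set A := √2 * c / √b / 2 with hA
  set B := 3 / 2 * ((4 * b ^ 2 - 3 * c ^ 2) / (6 * √2 * b ^ ((3 : ℝ) / 2) * c)) with hB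
  have hA_sq : A ^ 2 = c ^ 2 / (2 * b) := by
    rw [hA, div_pow, div_pow, mul_pow, sq_sqrt zero_le_two, sq_sqrt hb.le]
    field_simp
  have hAB : 2 * A * B = (b ^ 2 - c ^ 2) / b ^ 2 + c ^ 2 / (4 * b ^ 2) := by
    rw [hA, hB, rpow_div_two_eq_sqrt 3 hb.le, rpow_ofNat]
    field_simp
    rw [show √b ^ 4 = (√b ^ 2) ^ 2 by ring, sq_sqrt hb.le]
    ring
  refine (isBigO_integral_sqrt_add_div_sq_sub_sq hb.ne' (by positivity) hA_sq hAB).congr' ?_ .rfl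
  filter_upwards [hF] with ν hν
  rw [hν, hA, hB]
  ring

/-- Meridian arclength on an oblate ellipsoid with semi-axes `b, b, c`: with
`Z = √(b−ν)`, one has
`F(ν) = (√2 c/√b) Z + ((4b²−3c²)/(6√2 b^{3/2} c)) Z³ + O(Z⁵)` as `ν → b⁻`. -/
theorem ellipsoid_arclength_expansion
    (b c : ℝ) (hc : 0 < c) (hcb : c ≤ b)
    (F : ℝ → ℝ)
    (hF : ∀ ν ∈ Ioo (0 : ℝ) b,
      F ν = ∫ t in ν..b, Real.sqrt ((b ^ 2 - c ^ 2) / b ^ 2 + c ^ 2 / (b ^ 2 - t ^ 2))) :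
    (fun ν => F ν -
        (Real.sqrt 2 * c / Real.sqrt b * Real.sqrt (b - ν) +
          (4 * b ^ 2 - 3 * c ^ 2) / (6 * Real.sqrt 2 * b ^ ((3:ℝ)/2) * c)
            * Real.sqrt (b - ν) ^ 3))
      =O[nhdsWithin b (Iio b)] (fun ν => Real.sqrt (b - ν) ^ 5) :=
  have hb : 0 < b := hc.trans_le hcb
  ellipsoid_arclength_expansion_general hb hc (eventually_of_mem (Ioo_mem_nhdsLT hb) hF)
end

section
/- Let 0 < c ≤ b and define F(ν) := ∫_ν^b √( (b²−c²)/b² + c²/(b²−t²) ) dt for ν ∈ (0,b). Then, as ν → b⁻, ν = b − (b/(2c²))·F(ν)² + (b(4b² − 3c²)/(24c⁶))·F(ν)⁴ + O(F(ν)⁶). In particular, for the profile function m of the oblate ellipsoid of revolution with semi-axes b, b, c, defined by m(R) = ν where a − R = F(ν) and a := F(0⁺) is the quarter-meridian length, one has m(r) = b − α(a−r)² + β(a−r)⁴ + O((a−r)⁶) with α = b/(2c²) and β = b(4b²−3c²)/(24c⁶). -/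
open Set Asymptotics Filter Real

/-!
Parametrize the meridian ellipse by `(b cos θ, c sin θ)`. Its speed `√(c² cos² θ + b² sin² θ)` is
smooth at the equator `θ = 0`, and the substitution `t = b cos θ` turns `F (b cos φ)` into the
arclength `s(φ) = ∫₀^φ √(c² cos² θ + b² sin² θ) dθ`, which is `c φ + (b² - c²) / (6 c) φ³ + O(φ⁵)`.
Eliminating `φ` between this and `b cos φ = b - b φ² / 2 + b φ⁴ / 24 + O(φ⁶)` gives the expansion
of `b cos φ` in powers of `s(φ)`. By the intermediate value theorem every `ν` slightly below `b` is
some `b cos φ`, and every `r` slightly below `a` is some `a - s(φ)`, with small `φ > 0`.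
-/

open scoped Topology

lemma isBigO_pow_pow_nhds_zero {𝕜 : Type*} [NormedField 𝕜] {m n : ℕ} (hmn : m ≤ n) :
    (fun x : 𝕜 => x ^ n) =O[𝓝 0] (· ^ m) := by
  rcases hmn.eq_or_lt with rfl | hlt
  · exact isBigO_refl _ _
  · exact (isLittleO_pow_pow hlt).isBigO

lemma isBigO_of_sub_const_mul_isLittleO {α 𝕜 : Type*} [NormedField 𝕜] {l : Filter α} {u s : α → 𝕜}
    {c : 𝕜} (hc : c ≠ 0) (hs : (fun x => s x - c * u x) =o[l] u) : u =O[l] s := by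
  have hequiv : s ~[l] fun x => c * u x := hs.const_mul_right hc
  exact ((isBigO_refl u l).const_mul_right hc).trans hequiv.isBigO_symm

lemma isBigO_sq_sub_sq {𝕜 : Type*} [NormedField 𝕜] {f g : 𝕜 → 𝕜} {m n : ℕ} (hmn : m ≤ n)
    (hg : g =O[𝓝 0] (· ^ m)) (hfg : (fun x => f x - g x) =O[𝓝 0] (· ^ n)) :
    (fun x => f x ^ 2 - g x ^ 2) =O[𝓝 0] (· ^ (n + m)) := by
  have hadd : (fun x => f x + g x) =O[𝓝 0] (· ^ m) :=
    ((hfg.trans (isBigO_pow_pow_nhds_zero hmn)).add (hg.const_mul_left 2)).congr_left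
      fun x => by ring
  exact (hfg.mul hadd).congr (fun x => by ring) fun x => (pow_add x n m).symm

lemma isBigO_primitive_pow_succ {E : Type*} [NormedAddCommGroup E] [NormedSpace ℝ E]
    {f : ℝ → E} {a : ℝ} {n : ℕ} (hf : f =O[𝓝 a] (fun t => (t - a) ^ n)) :
    (fun x => ∫ t in a..x, f t) =O[𝓝 a] (fun x => (x - a) ^ (n + 1)) := by
  obtain ⟨C, hC, hbound⟩ := hf.exists_nonneg
  obtain ⟨ε, hε, hball⟩ := Metric.eventually_nhds_iff.1 hbound.bound
  refine .of_bound C ?_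
  filter_upwards [Metric.ball_mem_nhds a hε] with x hx
  have hbound_on : ∀ t ∈ uIoc a x, ‖f t‖ ≤ C * |x - a| ^ n := fun t ht => by
    have hle : |t - a| ≤ |x - a| := abs_sub_left_of_mem_uIcc (uIoc_subset_uIcc ht)
    calc ‖f t‖ ≤ C * ‖(t - a) ^ n‖ := hball (hle.trans_lt hx)
      _ = C * |t - a| ^ n := by rw [norm_pow, Real.norm_eq_abs]
      _ ≤ C * |x - a| ^ n := by gcongr
  calc ‖∫ t in a..x, f t‖ ≤ C * |x - a| ^ n * |x - a| :=
        intervalIntegral.norm_integral_le_of_norm_le_const hbound_on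
    _ = C * ‖(x - a) ^ (n + 1)‖ := by rw [norm_pow, Real.norm_eq_abs]; ring

lemma isBigO_even_quartic_in_odd_parameter {y s : ℝ → ℝ} {c d y₀ y₁ y₂ : ℝ} (hc : c ≠ 0)
    (hs : (fun x => s x - (c * x + d * x ^ 3)) =O[𝓝 0] (· ^ 5))
    (hy : (fun x => y x - (y₀ + y₁ * x ^ 2 + y₂ * x ^ 4)) =O[𝓝 0] (· ^ 6)) :
    (fun x => y x - (y₀ + y₁ / c ^ 2 * s x ^ 2 + (y₂ - 2 * y₁ * d / c) / c ^ 4 * s x ^ 4))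
      =O[𝓝 0] (fun x => s x ^ 6) := by
  have hlin : (fun x : ℝ => c * x) =O[𝓝 0] (· ^ 1) := by
    simpa using (isBigO_refl (fun x : ℝ => x) (𝓝 0)).const_mul_left c
  have hcube : (fun x : ℝ => d * x ^ 3) =O[𝓝 0] (· ^ 3) := (isBigO_refl _ _).const_mul_left d
  have hs_lin : (fun x => s x - c * x) =O[𝓝 0] (· ^ 3) :=
    ((hs.trans (isBigO_pow_pow_nhds_zero (by norm_num))).add hcube).congr_left
      fun x => by ring
  have hs_sq : (fun x => s x ^ 2 - (c * x + d * x ^ 3) ^ 2) =O[𝓝 0] (· ^ 6) :=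
    isBigO_sq_sub_sq (by norm_num)
      (hlin.add (hcube.trans (isBigO_pow_pow_nhds_zero (by norm_num)))) hs
  have hs_fourth : (fun x => (s x ^ 2) ^ 2 - ((c * x) ^ 2) ^ 2) =O[𝓝 0] (· ^ 6) :=
    isBigO_sq_sub_sq (m := 2) (n := 4) (by norm_num)
      ((hlin.pow 2).congr_right fun x => by ring) (isBigO_sq_sub_sq (by norm_num) hlin hs_lin)
  have hpow : (fun x : ℝ => x ^ 3) =o[𝓝 0] (fun x => x) := isLittleO_pow_id (by norm_num)
  have hparam : (fun x : ℝ => x ^ 6) =O[𝓝 0] (fun x => s x ^ 6) :=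
    (isBigO_of_sub_const_mul_isLittleO hc (hs_lin.trans_isLittleO hpow)).pow 6
  have hsplit (x : ℝ) :
      y x - (y₀ + y₁ * x ^ 2 + y₂ * x ^ 4)
          - y₁ / c ^ 2 * (s x ^ 2 - (c * x + d * x ^ 3) ^ 2)
          - (y₂ - 2 * y₁ * d / c) / c ^ 4 * ((s x ^ 2) ^ 2 - ((c * x) ^ 2) ^ 2)
          - y₁ / c ^ 2 * d ^ 2 * x ^ 6 =
        y x - (y₀ + y₁ / c ^ 2 * s x ^ 2 + (y₂ - 2 * y₁ * d / c) / c ^ 4 * s x ^ 4) := by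
    field_simp
    ring
  exact ((((hy.sub (hs_sq.const_mul_left _)).sub (hs_fourth.const_mul_left _)).sub
    ((isBigO_refl _ _).const_mul_left _)).congr_left hsplit).trans hparam

lemma nhdsLT_le_map_nhdsGT {α β : Type*} [ConditionallyCompleteLinearOrder α] [TopologicalSpace α]
    [OrderTopology α] [DenselyOrdered α] [LinearOrder β] [TopologicalSpace β]
    [OrderClosedTopology β] {f : α → β} {x : α} (hf : Continuous f)
    (hlt : ∃ᶠ y in 𝓝[>] x, f y < f x) : 𝓝[<] f x ≤ map f (𝓝[>] x) := by
  intro s hs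
  obtain ⟨z, hxz⟩ := (hlt.and_eventually self_mem_nhdsWithin).exists
  obtain ⟨u, hu, hus⟩ := (mem_nhdsGT_iff_exists_Ioo_subset' hxz.2).1 hs
  obtain ⟨y, hy, hxy, hyu⟩ := (hlt.and_eventually (Ioo_mem_nhdsGT hu)).exists
  filter_upwards [Ioo_mem_nhdsLT hy] with w hw
  obtain ⟨v, ⟨hxv, hvy⟩, rfl⟩ := intermediate_value_Ioo' hxy.le hf.continuousOn hw
  exact hus ⟨hxv, hvy.trans hyu⟩

lemma abs_sqrt_sq_add_sub_le {c x : ℝ} (hc : 0 < c) (hx : 0 ≤ c ^ 2 + x) :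
    |√(c ^ 2 + x) - (c + x / (2 * c))| ≤ x ^ 2 / (2 * c ^ 3) := by
  set w := √(c ^ 2 + x)
  have hx_eq : x = (w - c) * (w + c) := by linear_combination -Real.sq_sqrt hx
  have hcw : c ^ 2 ≤ (w + c) ^ 2 := by gcongr; linarith [Real.sqrt_nonneg (c ^ 2 + x)]
  calc |w - (c + x / (2 * c))| = |-((w - c) ^ 2 / (2 * c))| := by
        congr 1; rw [hx_eq]; field_simp; ring
    _ = (w - c) ^ 2 / (2 * c) := by rw [abs_neg, abs_of_nonneg (by positivity)]
    _ = (w - c) ^ 2 * c ^ 2 / (2 * c ^ 3) := by field_simp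
    _ ≤ (w - c) ^ 2 * (w + c) ^ 2 / (2 * c ^ 3) := by gcongr
    _ = x ^ 2 / (2 * c ^ 3) := by rw [hx_eq, mul_pow]

lemma sin_sub_cubic_isBigO : (fun x : ℝ => sin x - (x - x ^ 3 / 6)) =O[𝓝 0] (· ^ 5) := by
  refine .of_bound (1 / 100) ?_
  filter_upwards [Metric.closedBall_mem_nhds (0 : ℝ) one_pos] with x hx
  rw [mem_closedBall_zero_iff] at hx
  simpa [div_eq_inv_mul] using Real.sin_bound hx

lemma sin_sq_sub_sq_isBigO : (fun x : ℝ => sin x ^ 2 - x ^ 2) =O[𝓝 0] (· ^ 4) := by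
  have hsin : (fun x : ℝ => sin x - x) =O[𝓝 0] (· ^ 3) :=
    ((sin_sub_cubic_isBigO.trans (isBigO_pow_pow_nhds_zero (by norm_num))).sub
      ((isBigO_refl _ _).const_mul_left (1 / 6))).congr_left fun x => by ring
  exact isBigO_sq_sub_sq (m := 1) (by norm_num) (by simpa using isBigO_refl _ _) hsin

lemma cos_sub_quartic_isBigO :
    (fun x : ℝ => cos x - (1 - x ^ 2 / 2 + x ^ 4 / 24)) =O[𝓝 0] (· ^ 6) := by
  have hint (x : ℝ) : ∫ t in (0 : ℝ)..x, (sin t - (t - t ^ 3 / 6)) =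
      -(cos x - (1 - x ^ 2 / 2 + x ^ 4 / 24)) := by
    have hderiv (t : ℝ) : HasDerivAt (fun t => -(cos t - (1 - t ^ 2 / 2 + t ^ 4 / 24)))
        (sin t - (t - t ^ 3 / 6)) t := by
      refine ((hasDerivAt_cos t).sub (((((hasDerivAt_pow 2 t).div_const 2).const_sub 1).add
        ((hasDerivAt_pow 4 t).div_const 24)))).neg.congr_deriv ?_
      push_cast
      ring
    rw [intervalIntegral.integral_eq_sub_of_hasDerivAt (fun t _ => hderiv t)
      (Continuous.intervalIntegrable (by fun_prop) _ _)]
    simp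
  have hprim := isBigO_primitive_pow_succ (a := 0) (n := 5) (by simpa using sin_sub_cubic_isBigO)
  simpa [hint] using hprim.neg_left

/-- Speed of the parametrization `θ ↦ (b cos θ, c sin θ)` of the meridian ellipse, whose equator
point is at `θ = 0`. -/
noncomputable def meridianSpeed (b c θ : ℝ) : ℝ := √(c ^ 2 * cos θ ^ 2 + b ^ 2 * sin θ ^ 2)

/-- Meridian arclength from the equator to the point `(b cos φ, c sin φ)`. -/
noncomputable def meridianArc (b c φ : ℝ) : ℝ := ∫ θ in (0 : ℝ)..φ, meridianSpeed b c θ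

section Meridian

variable {b c : ℝ}

lemma continuous_meridianSpeed : Continuous (meridianSpeed b c) := by
  unfold meridianSpeed
  fun_prop

lemma meridianSpeed_pos (hb : b ≠ 0) (hc : c ≠ 0) (θ : ℝ) : 0 < meridianSpeed b c θ := by
  refine Real.sqrt_pos.2 ?_
  rcases eq_or_ne (sin θ) 0 with hsin | hsin
  · have hcos : cos θ ^ 2 = 1 := by simpa [hsin] using cos_sq_add_sin_sq θ
    rw [hcos]
    positivity
  · positivity

lemma continuous_meridianArc : Continuous (meridianArc b c) :=
  intervalIntegral.continuous_primitive
    (fun _ _ => continuous_meridianSpeed.intervalIntegrable _ _) 0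

lemma meridianArc_pos (hb : b ≠ 0) (hc : c ≠ 0) {φ : ℝ} (hφ : 0 < φ) : 0 < meridianArc b c φ :=
  intervalIntegral.intervalIntegral_pos_of_pos (continuous_meridianSpeed.intervalIntegrable _ _)
    (meridianSpeed_pos hb hc) hφ

lemma meridianSpeed_sub_quadratic_isBigO (hc : 0 < c) :
    (fun θ => meridianSpeed b c θ - (c + (b ^ 2 - c ^ 2) / (2 * c) * θ ^ 2)) =O[𝓝 0] (· ^ 4) := by
  set k := b ^ 2 - c ^ 2
  have hradicand (θ : ℝ) : c ^ 2 * cos θ ^ 2 + b ^ 2 * sin θ ^ 2 = c ^ 2 + k * sin θ ^ 2 := by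
    rw [cos_sq']
    ring
  have hsqrt : (fun θ => meridianSpeed b c θ - (c + k * sin θ ^ 2 / (2 * c)))
      =O[𝓝 0] (fun θ => (k * sin θ ^ 2) ^ 2) := by
    refine .of_bound (1 / (2 * c ^ 3)) (.of_forall fun θ => ?_)
    have hnonneg : 0 ≤ c ^ 2 + k * sin θ ^ 2 := hradicand θ ▸ by positivity
    rw [meridianSpeed, hradicand, Real.norm_eq_abs, Real.norm_of_nonneg (sq_nonneg _),
      one_div_mul_eq_div]
    exact abs_sqrt_sq_add_sub_le hc hnonneg
  have hsin : (fun θ => (k * sin θ ^ 2) ^ 2) =O[𝓝 0] (· ^ 4) :=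
    ((isEquivalent_sin.isBigO.pow 4).const_mul_left (k ^ 2)).congr_left fun θ => by ring
  exact ((hsqrt.trans hsin).add (sin_sq_sub_sq_isBigO.const_mul_left (k / (2 * c)))).congr_left
    fun θ => by ring

lemma meridianArc_sub_cubic_isBigO (hc : 0 < c) :
    (fun φ => meridianArc b c φ - (c * φ + (b ^ 2 - c ^ 2) / (6 * c) * φ ^ 3)) =O[𝓝 0] (· ^ 5) := by
  have hint (φ : ℝ) :
      ∫ θ in (0 : ℝ)..φ, (meridianSpeed b c θ - (c + (b ^ 2 - c ^ 2) / (2 * c) * θ ^ 2)) =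
      meridianArc b c φ - (c * φ + (b ^ 2 - c ^ 2) / (6 * c) * φ ^ 3) := by
    rw [intervalIntegral.integral_sub (continuous_meridianSpeed.intervalIntegrable _ _)
      (Continuous.intervalIntegrable (by fun_prop) _ _), ← meridianArc,
      intervalIntegral.integral_add (by simp) (Continuous.intervalIntegrable (by fun_prop) _ _),
      intervalIntegral.integral_const_mul, integral_pow, intervalIntegral.integral_const]
    push_cast
    rw [smul_eq_mul]
    ring
  have hprim := isBigO_primitive_pow_succ (a := 0) (n := 4)
    (by simpa using meridianSpeed_sub_quadratic_isBigO (b := b) hc)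
  simpa [hint] using hprim

lemma mul_cos_sub_meridianArc_quartic_isBigO (hc : 0 < c) :
    (fun φ => b * cos φ - (b - b / (2 * c ^ 2) * meridianArc b c φ ^ 2 +
        b * (4 * b ^ 2 - 3 * c ^ 2) / (24 * c ^ 6) * meridianArc b c φ ^ 4))
      =O[𝓝 0] (fun φ => meridianArc b c φ ^ 6) := by
  have hcos : (fun φ => b * cos φ - (b + -(b / 2) * φ ^ 2 + b / 24 * φ ^ 4)) =O[𝓝 0] (· ^ 6) :=
    (cos_sub_quartic_isBigO.const_mul_left b).congr_left fun φ => by ring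
  refine (isBigO_even_quartic_in_odd_parameter hc.ne' (meridianArc_sub_cubic_isBigO hc)
    hcos).congr_left fun φ => ?_
  field_simp
  ring

lemma sqrt_integrand_mul_sin_eq_meridianSpeed (hb : 0 < b) {θ : ℝ} (hθ : 0 < sin θ) :
    √((b ^ 2 - c ^ 2) / b ^ 2 + c ^ 2 / (b ^ 2 - (b * cos θ) ^ 2)) * (b * sin θ) =
      meridianSpeed b c θ := by
  have hbs : 0 < b * sin θ := by positivity
  have hdenom : b ^ 2 - (b * cos θ) ^ 2 = (b * sin θ) ^ 2 := by rw [mul_pow, cos_sq']; ring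
  rw [hdenom, meridianSpeed, ← Real.sqrt_sq hbs.le, ← Real.sqrt_mul' _ (sq_nonneg _), cos_sq',
    Real.sqrt_sq hbs.le]
  congr 1
  field_simp
  ring

lemma integral_sqrt_eq_meridianArc (hb : 0 < b) {φ : ℝ} (hφ : φ ∈ Icc 0 π) :
    ∫ t in (b * cos φ)..b, √((b ^ 2 - c ^ 2) / b ^ 2 + c ^ 2 / (b ^ 2 - t ^ 2)) =
      meridianArc b c φ := by
  have hIoo : Ioo (min 0 φ) (max 0 φ) ⊆ Ioo 0 π := by
    rw [min_eq_left hφ.1, max_eq_right hφ.1]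
    exact Ioo_subset_Ioo_right hφ.2
  have hsubst := intervalIntegral.integral_comp_mul_deriv_of_deriv_nonpos (a := 0) (b := φ)
    (f := fun θ => b * cos θ) (f' := fun θ => b * -sin θ)
    (g := fun t => √((b ^ 2 - c ^ 2) / b ^ 2 + c ^ 2 / (b ^ 2 - t ^ 2))) (by fun_prop)
    (fun θ _ => (hasDerivAt_cos θ).const_mul b)
    (fun θ hθ => mul_nonpos_of_nonneg_of_nonpos hb.le
      (neg_nonpos.2 (sin_pos_of_mem_Ioo (hIoo hθ)).le))
  simp only [cos_zero, mul_one] at hsubst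
  rw [intervalIntegral.integral_symm, ← hsubst, ← intervalIntegral.integral_neg, meridianArc]
  refine intervalIntegral.integral_congr_Ioo_of_le hφ.1 fun θ hθ => ?_
  have hsin : 0 < sin θ := sin_pos_of_pos_of_lt_pi hθ.1 (hθ.2.trans_le hφ.2)
  simpa only [Function.comp_apply, mul_neg, neg_neg] using
    sqrt_integrand_mul_sin_eq_meridianSpeed hb hsin

lemma eventually_mul_cos_mem_Ioo (hb : 0 < b) : ∀ᶠ φ in 𝓝[>] 0, b * cos φ ∈ Ioo 0 b := by
  filter_upwards [Ioo_mem_nhdsGT pi_div_two_pos] with φ hφ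
  have hcos_pos : 0 < cos φ := cos_pos_of_mem_Ioo ⟨by linarith [hφ.1, hφ.2], hφ.2⟩
  have hcos_lt : cos φ < 1 := by
    simpa using cos_lt_cos_of_nonneg_of_le_pi_div_two le_rfl hφ.2.le hφ.1
  exact ⟨by positivity, mul_lt_of_lt_one_right hb hcos_lt⟩

lemma nhdsLT_le_map_mul_cos (hb : 0 < b) : 𝓝[<] b ≤ map (fun φ => b * cos φ) (𝓝[>] 0) := by
  have hlt : ∀ᶠ φ in 𝓝[>] 0, b * cos φ < b * cos 0 :=
    (eventually_mul_cos_mem_Ioo hb).mono fun φ hφ => by simpa using hφ.2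
  simpa using nhdsLT_le_map_nhdsGT (by fun_prop) hlt.frequently

lemma nhdsLT_le_map_sub_meridianArc (hb : b ≠ 0) (hc : c ≠ 0) (a : ℝ) :
    𝓝[<] a ≤ map (fun φ => a - meridianArc b c φ) (𝓝[>] 0) := by
  have hzero : meridianArc b c 0 = 0 := intervalIntegral.integral_same
  have hlt : ∀ᶠ φ in 𝓝[>] 0, a - meridianArc b c φ < a - meridianArc b c 0 := by
    filter_upwards [self_mem_nhdsWithin] with φ hφ
    simpa [hzero] using meridianArc_pos hb hc hφ
  have hcont : Continuous fun φ => a - meridianArc b c φ :=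
    continuous_const.sub continuous_meridianArc
  simpa [hzero] using nhdsLT_le_map_nhdsGT hcont hlt.frequently

end Meridian

theorem ellipsoid_profile_expansion_general
    (b c : ℝ) (hb : 0 < b) (hc : 0 < c)
    (F : ℝ → ℝ)
    (hF : ∀ ν ∈ Ioo (0 : ℝ) b,
      F ν = ∫ t in ν..b, √((b ^ 2 - c ^ 2) / b ^ 2 + c ^ 2 / (b ^ 2 - t ^ 2)))
    (a : ℝ) (haF : Tendsto F (𝓝[>] 0) (𝓝 a))
    (m : ℝ → ℝ) (hmF : ∀ ν ∈ Ioo (0 : ℝ) b, m (a - F ν) = ν) :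
    ((fun ν => ν -
        (b - b / (2 * c ^ 2) * F ν ^ 2 +
          b * (4 * b ^ 2 - 3 * c ^ 2) / (24 * c ^ 6) * F ν ^ 4))
      =O[𝓝[<] b] (fun ν => F ν ^ 6)) ∧
    ((fun r => m r -
        (b - b / (2 * c ^ 2) * (a - r) ^ 2 +
          b * (4 * b ^ 2 - 3 * c ^ 2) / (24 * c ^ 6) * (a - r) ^ 4))
      =O[𝓝[<] a] (fun r => (a - r) ^ 6)) := by
  have hexp := (mul_cos_sub_meridianArc_quartic_isBigO (b := b) hc).mono
    (nhdsWithin_le_nhds (s := Ioi 0))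
  have hmem := eventually_mul_cos_mem_Ioo hb
  have hF_arc : ∀ᶠ φ in 𝓝[>] 0, F (b * cos φ) = meridianArc b c φ := by
    filter_upwards [hmem, Ioo_mem_nhdsGT pi_pos] with φ hφ hφπ
    rw [hF _ hφ, integral_sqrt_eq_meridianArc hb (Ioo_subset_Icc_self hφπ)]
  have hm_arc : ∀ᶠ φ in 𝓝[>] 0, m (a - meridianArc b c φ) = b * cos φ := by
    filter_upwards [hmem, hF_arc] with φ hφ hFφ
    rw [← hFφ, hmF _ hφ]
  constructor
  · refine (isBigO_map.2 ?_).mono (nhdsLT_le_map_mul_cos hb)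
    refine hexp.congr' ?_ ?_ <;> filter_upwards [hF_arc] with φ hFφ <;>
      simp only [Function.comp_apply, hFφ]
  · refine (isBigO_map.2 ?_).mono (nhdsLT_le_map_sub_meridianArc hb.ne' hc.ne' a)
    refine hexp.congr' ?_ (.of_forall fun φ => by simp only [Function.comp_apply, sub_sub_cancel])
    filter_upwards [hm_arc] with φ hmφ
    simp only [Function.comp_apply, hmφ, sub_sub_cancel]

/-- Inverting the meridian arclength on an oblate ellipsoid with semi-axes `b, b, c`:
`ν = b − (b/(2c²)) F(ν)² + (b(4b²−3c²)/(24c⁶)) F(ν)⁴ + O(F(ν)⁶)` as `ν → b⁻`; in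
particular the profile function `m` (with `m(a − F(ν)) = ν`, `a` the quarter-meridian
length) satisfies `m(r) = b − α(a−r)² + β(a−r)⁴ + O((a−r)⁶)` with `α = b/(2c²)` and
`β = b(4b²−3c²)/(24c⁶)`. -/
theorem ellipsoid_profile_expansion
    (b c : ℝ) (hc : 0 < c) (hcb : c ≤ b)
    (F : ℝ → ℝ)
    (hF : ∀ ν ∈ Ioo (0 : ℝ) b,
      F ν = ∫ t in ν..b, Real.sqrt ((b ^ 2 - c ^ 2) / b ^ 2 + c ^ 2 / (b ^ 2 - t ^ 2)))
    (a : ℝ) (haF : Tendsto F (nhdsWithin 0 (Ioi 0)) (nhds a))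
    (m : ℝ → ℝ) (hmF : ∀ ν ∈ Ioo (0 : ℝ) b, m (a - F ν) = ν) :
    ((fun ν => ν -
        (b - b / (2 * c ^ 2) * F ν ^ 2 +
          b * (4 * b ^ 2 - 3 * c ^ 2) / (24 * c ^ 6) * F ν ^ 4))
      =O[nhdsWithin b (Iio b)] (fun ν => F ν ^ 6)) ∧
    ((fun r => m r -
        (b - b / (2 * c ^ 2) * (a - r) ^ 2 +
          b * (4 * b ^ 2 - 3 * c ^ 2) / (24 * c ^ 6) * (a - r) ^ 4))
      =O[nhdsWithin a (Iio a)] (fun r => (a - r) ^ 6)) :=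
  ellipsoid_profile_expansion_general b c (hc.trans_le hcb) hc F hF a haF m hmF
end

section
/- For every t > 0 the following identity holds: Σ_{n∈ℤ} (−1)ⁿ (2n+1) e^{−(n²+n)t} = π^{3/2} · t^{−3/2} · e^{t/4} · Σ_{k∈ℤ} (−1)^k (2k+1) e^{−(2k+1)²π²/(4t)}, where both series converge absolutely. -/
open Real

/-!
The series `θ₁'(0 | τ) = ∑ (-1)ⁿ (2n+1) exp(πi (n+1/2)² τ)` is a combination of the Jacobi theta
function and its `z`-derivative at the half period `z = (1 + τ)/2`. Up to sign and a period, the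
substitution `(z, τ) ↦ (z/τ, -1/τ)` fixes this half period, so the functional equations of the two
theta functions make `θ₁'(0 | τ)` transform with weight `3/2` under `τ ↦ -1/τ`. Completing the
square, `n² + n = (n + 1/2)² - 1/4`, turns the case `τ = i t/π` into the heat kernel identity.
-/

open Complex (I)

/-- The summand of the series for the theta constant `θ₁'(0 | τ)`, see `thetaOneDeriv`. -/
noncomputable def thetaOneDerivTerm (n : ℤ) (τ : ℂ) : ℂ :=
  (-1) ^ n * (2 * n + 1) * Complex.exp (π * I * (n + 1 / 2) ^ 2 * τ)

/-- The theta constant `θ₁'(0 | τ)`: the value at `z = 0` of the `z`-derivative of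
`θ₁(z | τ) = 2 ∑_{n ≥ 0} (-1)ⁿ exp(πi (n+1/2)² τ) sin((2n+1)z)`, written as a sum over all
integers. -/
noncomputable def thetaOneDeriv (τ : ℂ) : ℂ :=
  ∑' n : ℤ, thetaOneDerivTerm n τ

lemma jacobiTheta₂_term_half_period (n : ℤ) (τ : ℂ) :
    Complex.exp (π * I * τ / 4) * jacobiTheta₂_term n ((1 + τ) / 2) τ =
      (-1) ^ n * Complex.exp (π * I * (n + 1 / 2) ^ 2 * τ) := by
  rw [jacobiTheta₂_term, ← Complex.exp_pi_mul_I, ← Complex.exp_int_mul, ← Complex.exp_add,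
    ← Complex.exp_add]
  ring_nf

lemma thetaOneDerivTerm_eq_jacobiTheta₂_term (n : ℤ) (τ : ℂ) :
    thetaOneDerivTerm n τ = Complex.exp (π * I * τ / 4) *
      (jacobiTheta₂'_term n ((1 + τ) / 2) τ / (π * I) +
        jacobiTheta₂_term n ((1 + τ) / 2) τ) := by
  calc thetaOneDerivTerm n τ
      = (2 * n + 1) * ((-1) ^ n * Complex.exp (π * I * (n + 1 / 2) ^ 2 * τ)) := by
        rw [thetaOneDerivTerm]; ring
    _ = _ := by
        rw [← jacobiTheta₂_term_half_period, jacobiTheta₂'_term]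
        field_simp

lemma hasSum_thetaOneDerivTerm {τ : ℂ} (hτ : 0 < τ.im) :
    HasSum (thetaOneDerivTerm · τ) (Complex.exp (π * I * τ / 4) *
      (jacobiTheta₂' ((1 + τ) / 2) τ / (π * I) + jacobiTheta₂ ((1 + τ) / 2) τ)) := by
  simp only [thetaOneDerivTerm_eq_jacobiTheta₂_term]
  exact (((hasSum_jacobiTheta₂'_term _ hτ).div_const _).add
    (hasSum_jacobiTheta₂_term _ hτ)).mul_left _

lemma summable_thetaOneDerivTerm {τ : ℂ} (hτ : 0 < τ.im) : Summable (thetaOneDerivTerm · τ) :=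
  (hasSum_thetaOneDerivTerm hτ).summable

lemma thetaOneDeriv_eq_jacobiTheta₂ {τ : ℂ} (hτ : 0 < τ.im) :
    thetaOneDeriv τ = Complex.exp (π * I * τ / 4) *
      (jacobiTheta₂' ((1 + τ) / 2) τ / (π * I) + jacobiTheta₂ ((1 + τ) / 2) τ) :=
  (hasSum_thetaOneDerivTerm hτ).tsum_eq

lemma im_neg_one_div_pos {τ : ℂ} (hτ : 0 < τ.im) : 0 < (-1 / τ).im := by
  have hτ₀ : τ ≠ 0 := fun h => by simp [h] at hτ
  simpa [neg_div] using div_pos hτ (Complex.normSq_pos.mpr hτ₀)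

lemma jacobiTheta₂_half_period_functional_equation {τ : ℂ} (hτ : τ ≠ 0) :
    jacobiTheta₂' ((1 + τ) / 2) τ / (π * I) + jacobiTheta₂ ((1 + τ) / 2) τ =
      -1 / (τ * (-I * τ) ^ (1 / 2 : ℂ)) *
        Complex.exp (-π * I * ((1 + τ) / 2) ^ 2 / τ) *
        (jacobiTheta₂' ((1 + -1 / τ) / 2) (-1 / τ) / (π * I) +
          jacobiTheta₂ ((1 + -1 / τ) / 2) (-1 / τ)) := by
  have half_period_div : (1 + τ) / 2 / τ = -((1 + -1 / τ) / 2) + 1 := by field_simp; ring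
  rw [jacobiTheta₂'_functional_equation, jacobiTheta₂_functional_equation ((1 + τ) / 2),
    half_period_div, jacobiTheta₂_add_left, jacobiTheta₂_neg_left, jacobiTheta₂'_add_left,
    jacobiTheta₂'_neg_left]
  have cpow_half_ne_zero : (-I * τ) ^ (1 / 2 : ℂ) ≠ 0 := by simp [Complex.cpow_eq_zero_iff, hτ]
  field_simp [cpow_half_ne_zero]
  ring

lemma exp_mul_exp_half_period {τ : ℂ} (hτ : τ ≠ 0) :
    Complex.exp (π * I * τ / 4) * Complex.exp (-π * I * ((1 + τ) / 2) ^ 2 / τ) =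
      -I * Complex.exp (π * I * (-1 / τ) / 4) := by
  rw [← Complex.exp_neg_pi_div_two_mul_I, ← Complex.exp_add, ← Complex.exp_add]
  congr 1
  field_simp
  ring

theorem thetaOneDeriv_functional_equation {τ : ℂ} (hτ : 0 < τ.im) :
    thetaOneDeriv τ = 1 / (-I * τ) ^ (3 / 2 : ℂ) * thetaOneDeriv (-1 / τ) := by
  have hτ₀ : τ ≠ 0 := fun h => by simp [h] at hτ
  have one_div_cpow_three_halves : 1 / (-I * τ) ^ (3 / 2 : ℂ) =
      I / (τ * (-I * τ) ^ (1 / 2 : ℂ)) := by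
    rw [show (3 / 2 : ℂ) = 1 + 1 / 2 by norm_num, Complex.cpow_add _ _ (by simp [hτ₀]),
      Complex.cpow_one, mul_assoc, ← div_div, one_div, inv_neg, Complex.inv_I, neg_neg]
  rw [thetaOneDeriv_eq_jacobiTheta₂ hτ, thetaOneDeriv_eq_jacobiTheta₂ (im_neg_one_div_pos hτ),
    jacobiTheta₂_half_period_functional_equation hτ₀, one_div_cpow_three_halves,
    ← mul_assoc (Complex.exp _), mul_left_comm (Complex.exp _), exp_mul_exp_half_period hτ₀]
  ring

lemma thetaOneDerivTerm_I_mul_div_pi (n : ℤ) (t : ℂ) :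
    thetaOneDerivTerm n (I * t / π) =
      Complex.exp (-t / 4) * ((-1) ^ n * (2 * n + 1) * Complex.exp (-(n ^ 2 + n) * t)) := by
  have complete_square : π * I * (n + 1 / 2) ^ 2 * (I * t / π) =
      -t / 4 + -(n ^ 2 + n) * t := by
    field_simp
    rw [Complex.I_sq]
    ring
  rw [thetaOneDerivTerm, complete_square, Complex.exp_add]
  ring

lemma thetaOneDerivTerm_neg_one_div_I_mul_div_pi (k : ℤ) (t : ℂ) :
    thetaOneDerivTerm k (-1 / (I * t / π)) =
      (-1) ^ k * (2 * k + 1) * Complex.exp (-(2 * k + 1) ^ 2 * π ^ 2 / (4 * t)) := by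
  have neg_one_div : -1 / (I * t / π) = I * (π / t) := by
    rw [div_div_eq_mul_div, mul_comm I t, ← div_div, Complex.div_I]
    ring
  rw [thetaOneDerivTerm, neg_one_div]
  congr 2
  linear_combination (π ^ 2 * (k + 1 / 2) ^ 2 / t) * Complex.I_sq

lemma ofReal_mul_cpow {r : ℝ} (hr : 0 < r) (z s : ℂ) :
    ((r : ℂ) * z) ^ s = (r : ℂ) ^ s * z ^ s := by
  obtain rfl | hz := eq_or_ne z 0
  · obtain rfl | hs := eq_or_ne s 0 <;> simp [*]
  have hr₀ : (r : ℂ) ≠ 0 := Complex.ofReal_ne_zero.mpr hr.ne'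
  rw [Complex.cpow_def_of_ne_zero (mul_ne_zero hr₀ hz), Complex.cpow_def_of_ne_zero hr₀,
    Complex.cpow_def_of_ne_zero hz, Complex.log_ofReal_mul hr hz, ← Complex.exp_add,
    Complex.ofReal_log hr.le, add_mul]

lemma one_div_div_ofReal_cpow {r : ℝ} (hr : 0 < r) (z s : ℂ) :
    1 / (z / r) ^ s = (r : ℂ) ^ s * z ^ (-s) := by
  have hr₀ : (r : ℂ) ≠ 0 := Complex.ofReal_ne_zero.mpr hr.ne'
  have cpow_eq : z ^ s = (r : ℂ) ^ s * (z / r) ^ s := by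
    rw [← ofReal_mul_cpow hr, mul_div_cancel₀ z hr₀]
  rw [Complex.cpow_neg, cpow_eq, mul_inv, mul_inv_cancel_left₀ (by simp [hr₀]), one_div]

theorem sphere_heat_kernel_poisson_summation_general (t : ℂ) (ht : 0 < t.re) :
    Summable (fun n : ℤ => ‖(-1 : ℂ) ^ n * (2 * n + 1) * Complex.exp (-(n ^ 2 + n) * t)‖) ∧
    Summable (fun k : ℤ => ‖(-1 : ℂ) ^ k * (2 * k + 1) *
      Complex.exp (-(2 * k + 1) ^ 2 * π ^ 2 / (4 * t))‖) ∧
    ∑' n : ℤ, (-1 : ℂ) ^ n * (2 * n + 1) * Complex.exp (-(n ^ 2 + n) * t) =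
      π ^ (3 / 2 : ℂ) * t ^ (-3 / 2 : ℂ) * Complex.exp (t / 4) *
        ∑' k : ℤ, (-1 : ℂ) ^ k * (2 * k + 1) *
          Complex.exp (-(2 * k + 1) ^ 2 * π ^ 2 / (4 * t)) := by
  have hτ : 0 < (I * t / π).im := by simpa using div_pos ht pi_pos
  have exp_mul_exp_neg : Complex.exp (t / 4) * Complex.exp (-t / 4) = 1 := by
    rw [neg_div, ← Complex.exp_add, add_neg_cancel, Complex.exp_zero]
  have summable_sphere := summable_thetaOneDerivTerm hτ
  have summable_dual := summable_thetaOneDerivTerm (im_neg_one_div_pos hτ)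
  have functional_equation := thetaOneDeriv_functional_equation hτ
  have rotate : -I * (I * t / π) = t / π := by
    linear_combination (-t / π) * Complex.I_sq
  rw [rotate, one_div_div_ofReal_cpow pi_pos, ← neg_div] at functional_equation
  simp only [thetaOneDeriv, thetaOneDerivTerm_I_mul_div_pi,
    thetaOneDerivTerm_neg_one_div_I_mul_div_pi, tsum_mul_left]
    at summable_sphere summable_dual functional_equation
  refine ⟨((summable_mul_left_iff (Complex.exp_ne_zero _)).mp summable_sphere).norm,
    summable_dual.norm, ?_⟩
  linear_combination Complex.exp (t / 4) * functional_equation -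
    (∑' n : ℤ, (-1 : ℂ) ^ n * (2 * n + 1) * Complex.exp (-(n ^ 2 + n) * t)) * exp_mul_exp_neg

/-- Poisson summation / Jacobi-type transformation for the spherical heat kernel series:
`Σ_{n∈ℤ} (−1)ⁿ(2n+1)e^{−(n²+n)t}
  = π^{3/2} t^{−3/2} e^{t/4} Σ_{k∈ℤ} (−1)^k (2k+1) e^{−(2k+1)²π²/(4t)}`,
both series converging absolutely. -/
theorem sphere_heat_kernel_poisson_summation (t : ℝ) (ht : 0 < t) :
    Summable (fun n : ℤ => |(-1 : ℝ) ^ n * (2 * (n : ℝ) + 1) *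
      Real.exp (-((n : ℝ) ^ 2 + (n : ℝ)) * t)|) ∧
    Summable (fun k : ℤ => |(-1 : ℝ) ^ k * (2 * (k : ℝ) + 1) *
      Real.exp (-(2 * (k : ℝ) + 1) ^ 2 * π ^ 2 / (4 * t))|) ∧
    ∑' n : ℤ, (-1 : ℝ) ^ n * (2 * (n : ℝ) + 1) * Real.exp (-((n : ℝ) ^ 2 + (n : ℝ)) * t)
      = π ^ ((3 : ℝ) / 2) * t ^ (-(3 : ℝ) / 2) * Real.exp (t / 4) *
        ∑' k : ℤ, (-1 : ℝ) ^ k * (2 * (k : ℝ) + 1) *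
          Real.exp (-(2 * (k : ℝ) + 1) ^ 2 * π ^ 2 / (4 * t)) := by
  simp only [← Real.norm_eq_abs, ← Complex.norm_real, ← Complex.ofReal_inj]
  push_cast [Complex.ofReal_cpow pi_pos.le, Complex.ofReal_cpow ht.le]
  exact sphere_heat_kernel_poisson_summation_general t ht
end

section
/- lim_{t→0⁺} t^{3/2} · e^{π²/(4t)} · Σ_{n∈ℤ} (−1)ⁿ (2n+1) e^{−(n²+n)t} = 2π^{3/2}. Consequently, the heat kernel p_t(x, x̂) = (1/8π) Σ_{n∈ℤ}(−1)ⁿ(2n+1)e^{−(n²+n)t} between antipodal points of the unit 2-sphere satisfies p_t(x, x̂) ≃ (√π/4) t^{−3/2} e^{−π²/(4t)} as t → 0⁺, i.e. lim_{t→0⁺} 4 t^{3/2} e^{π²/(4t)} p_t(x,x̂)/√π = 1. -/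
open Real Filter Set

/-!
Up to the factor `e^{t/4}`, the series is `∑ (-1)ⁿ (2n + 1) e^{-(n + 1/2)² t}`. Its terms are
invariant under the reflection `n ↦ -1 - n`, which exchanges even and odd integers, so it is twice
its even part, which is `4 ∑ (k + 1/4) e^{-4 (k + 1/4)² t}`. Poisson summation turns the
latter into a sine series in the variable `s = π / (4t)`, whose leading term `2 sin (π/2) e^{-π s}`
gives the asymptotics as `s → ∞`.
-/

open HurwitzZeta Topology

theorem tendsto_exp_smul_tsum_exp_neg_smul {ι E : Type*} [NormedAddCommGroup E]
    [NormedSpace ℝ E] [CompleteSpace E] {rate : ι → ℝ} {c : ι → E} {i₀ : ι} {s₀ : ℝ}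
    (hmin : ∀ i ≠ i₀, c i ≠ 0 → rate i₀ < rate i)
    (hsum : Summable fun i => ‖exp (-rate i * s₀) • c i‖) :
    Tendsto (fun s : ℝ => exp (rate i₀ * s) • ∑' i, exp (-rate i * s) • c i) atTop
      (𝓝 (c i₀)) := by
  classical
  have merge_exp (s : ℝ) (i : ι) :
      exp (rate i₀ * s) • exp (-rate i * s) • c i = exp (-(rate i - rate i₀) * s) • c i := by
    rw [smul_smul, ← exp_add]
    ring_nf
  simp_rw [← tsum_const_smul'', merge_exp]
  have hsum_shifted : Summable fun i => ‖exp (-(rate i - rate i₀) * s₀) • c i‖ := by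
    simpa only [← merge_exp, norm_smul] using hsum.mul_left ‖exp (rate i₀ * s₀)‖
  rw [← tsum_ite_eq i₀ c]
  refine tendsto_tsum_of_dominated_convergence hsum_shifted (fun i => ?_) ?_
  · obtain rfl | hi := eq_or_ne i i₀
    · simp
    obtain hc | hc := eq_or_ne (c i) 0
    · simp [hi, hc]
    have hdecay : Tendsto (fun s => exp (-(rate i - rate i₀) * s)) atTop (𝓝 0) :=
      tendsto_exp_atBot.comp <|
        tendsto_id.const_mul_atTop_of_neg (by linarith [hmin i hi hc])
    simpa [hi] using hdecay.smul_const (c i)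
  · filter_upwards [eventually_ge_atTop s₀] with s hs i
    obtain rfl | hi := eq_or_ne i i₀
    · simp
    obtain hc | hc := eq_or_ne (c i) 0
    · simp [hc]
    have hexp : exp (-(rate i - rate i₀) * s) ≤ exp (-(rate i - rate i₀) * s₀) :=
      exp_le_exp.2 <| mul_le_mul_of_nonpos_left hs (by linarith [hmin i hi hc])
    simpa only [norm_smul, norm_of_nonneg (exp_pos _).le] using
      mul_le_mul_of_nonneg_right hexp (norm_nonneg (c i))

theorem tendsto_exp_mul_sinKernel (a : ℝ) :
    Tendsto (fun s : ℝ => exp (π * s) * sinKernel a s) atTop (𝓝 (2 * sin (2 * π * a))) := by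
  let rate (n : ℕ) : ℝ := π * n ^ 2
  let c (n : ℕ) : ℝ := 2 * n * sin (2 * π * a * n)
  have hasSum_sinKernel {s : ℝ} (hs : 0 < s) :
      HasSum (fun n => exp (-rate n * s) • c n) (sinKernel a s) :=
    (hasSum_nat_sinKernel a hs).congr_fun fun n => by
      simp only [rate, c, smul_eq_mul, neg_mul, mul_comm]
  have hmin : ∀ n ≠ 1, c n ≠ 0 → rate 1 < rate n := fun n hn hc => by
    have hn₀ : n ≠ 0 := by
      rintro rfl
      simp [c] at hc
    have hn₁ : (1 : ℝ) < n := by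
      norm_cast
      omega
    simp only [rate]
    gcongr
    exact_mod_cast hn₁
  have hlim := tendsto_exp_smul_tsum_exp_neg_smul hmin
    (hasSum_sinKernel one_pos).summable.norm
  have hlead : c 1 = 2 * sin (2 * π * a) := by simp [c]
  rw [hlead] at hlim
  refine hlim.congr' ?_
  filter_upwards [eventually_gt_atTop 0] with s hs
  rw [(hasSum_sinKernel hs).tsum_eq, smul_eq_mul]
  simp [rate]

section IntSums

variable {M : Type*} [AddCommMonoid M] [TopologicalSpace M] [ContinuousAdd M] {f : ℤ → M} {a b : M}

theorem hasSum_int_even_add_odd (heven : HasSum (fun k => f (2 * k)) a)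
    (hodd : HasSum (fun k => f (2 * k + 1)) b) : HasSum f (a + b) := by
  have hinj : Function.Injective fun k : ℤ => 2 * k := mul_right_injective₀ two_ne_zero
  refine (hinj.hasSum_range_iff.2 heven).add_isCompl ?_
    (((add_left_injective 1).comp hinj).hasSum_range_iff.2 hodd)
  simpa [Function.comp_def] using Int.isCompl_even_odd

theorem hasSum_int_of_neg_one_sub_eq (hf : ∀ n, f (-1 - n) = f n)
    (heven : HasSum (fun k => f (2 * k)) a) : HasSum f (a + a) := by
  refine hasSum_int_even_add_odd heven ?_
  refine ((Equiv.subLeft (-1 : ℤ)).hasSum_iff.2 heven).congr_fun fun k => ?_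
  rw [← hf]
  simp only [Function.comp_apply, Equiv.subLeft_apply]
  ring_nf

end IntSums

/-- The `n`-th term of the series for `8π p_t(x, x̂)`, where `p` is the heat kernel of the unit
2-sphere and `x`, `x̂` are antipodal points. -/
noncomputable def antipodalTerm (t : ℝ) (n : ℤ) : ℝ :=
  (-1) ^ n * (2 * n + 1) * exp (-((n : ℝ) ^ 2 + n) * t)

theorem antipodalTerm_neg_one_sub (t : ℝ) (n : ℤ) :
    antipodalTerm t (-1 - n) = antipodalTerm t n := by
  have hsign : (-1 : ℝ) ^ (-1 - n) = -(-1) ^ n := by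
    rw [zpow_sub₀ (by norm_num), div_eq_mul_inv, ← inv_zpow]
    norm_num
  simp only [antipodalTerm, hsign]
  push_cast
  ring_nf

theorem antipodalTerm_two_mul (t : ℝ) (k : ℤ) :
    antipodalTerm t (2 * k) =
      4 * exp (t / 4) * ((k + 1 / 4) * exp (-π * (k + 1 / 4) ^ 2 * (4 * t / π))) := by
  have complete_square : -(((2 * k : ℤ) : ℝ) ^ 2 + (2 * k : ℤ)) * t =
      t / 4 + -π * (k + 1 / 4) ^ 2 * (4 * t / π) := by
    push_cast
    field_simp
    ring
  rw [antipodalTerm, (even_two_mul k).neg_one_zpow, complete_square, exp_add]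
  push_cast
  ring

theorem hasSum_antipodalTerm {t : ℝ} (ht : 0 < t) :
    HasSum (antipodalTerm t)
      (8 * exp (t / 4) * oddKernel ((1 / 4 : ℝ) : UnitAddCircle) (4 * t / π)) := by
  have heven := (hasSum_int_oddKernel (1 / 4) (x := 4 * t / π) (by positivity)).mul_left
    (4 * exp (t / 4))
  simp_rw [← antipodalTerm_two_mul] at heven
  rw [show 8 * exp (t / 4) = 4 * exp (t / 4) + 4 * exp (t / 4) by ring, add_mul]
  exact hasSum_int_of_neg_one_sub_eq (antipodalTerm_neg_one_sub t) heven

theorem tsum_antipodalTerm_eq_sinKernel {t : ℝ} (ht : 0 < t) :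
    ∑' n, antipodalTerm t n = (π / t) ^ (3 / 2 : ℝ) * exp (t / 4) *
      sinKernel ((1 / 4 : ℝ) : UnitAddCircle) (π / (4 * t)) := by
  have hpow : (4 * t / π) ^ (3 / 2 : ℝ) = 8 * ((π / t) ^ (3 / 2 : ℝ))⁻¹ := by
    have hfour : (4 : ℝ) ^ (3 / 2 : ℝ) = 8 := by
      rw [show (4 : ℝ) = 2 ^ (2 : ℝ) by norm_num, ← rpow_mul zero_le_two]
      norm_num
    rw [mul_div_assoc, mul_rpow (by positivity) (by positivity), hfour,
      ← inv_rpow (by positivity), inv_div]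
  rw [(hasSum_antipodalTerm ht).tsum_eq, oddKernel_functional_equation, one_div_div, hpow]
  field_simp

theorem tendsto_tsum_antipodalTerm :
    Tendsto (fun t : ℝ => t ^ (3 / 2 : ℝ) * exp (π ^ 2 / (4 * t)) * ∑' n, antipodalTerm t n)
      (𝓝[>] 0) (𝓝 (2 * π ^ (3 / 2 : ℝ))) := by
  have hdual : Tendsto (fun t : ℝ => π / (4 * t)) (𝓝[>] 0) atTop := by
    convert tendsto_inv_nhdsGT_zero.const_mul_atTop (by positivity : 0 < π / 4) using 2
    field_simp
  have hsin : Tendsto (fun t : ℝ => exp (π * (π / (4 * t))) *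
      sinKernel ((1 / 4 : ℝ) : UnitAddCircle) (π / (4 * t))) (𝓝[>] 0) (𝓝 2) := by
    have hlead : 2 * sin (2 * π * (1 / 4)) = 2 := by
      rw [show 2 * π * (1 / 4) = π / 2 by ring, sin_pi_div_two, mul_one]
    simpa only [hlead, Function.comp_def] using (tendsto_exp_mul_sinKernel (1 / 4)).comp hdual
  have hexp : Tendsto (fun t : ℝ => π ^ (3 / 2 : ℝ) * exp (t / 4)) (𝓝[>] 0)
      (𝓝 (π ^ (3 / 2 : ℝ))) := by
    have hcont : Continuous fun t : ℝ => π ^ (3 / 2 : ℝ) * exp (t / 4) := by fun_prop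
    simpa using (hcont.tendsto 0).mono_left nhdsWithin_le_nhds
  refine (hsin.mul hexp).congr' ?_
  filter_upwards [self_mem_nhdsWithin] with t (ht : 0 < t)
  rw [tsum_antipodalTerm_eq_sinKernel ht, div_rpow pi_pos.le ht.le,
    show π ^ 2 / (4 * t) = π * (π / (4 * t)) by ring]
  field_simp

/-- Small-time asymptotics of the heat kernel between antipodal points on the unit
2-sphere: `lim_{t→0⁺} t^{3/2} e^{π²/(4t)} Σ_{n∈ℤ}(−1)ⁿ(2n+1)e^{−(n²+n)t} = 2π^{3/2}`;
consequently `p_t(x,x̂) = (1/8π) Σ_{n∈ℤ}(−1)ⁿ(2n+1)e^{−(n²+n)t}` satisfies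
`lim_{t→0⁺} 4 t^{3/2} e^{π²/(4t)} p_t(x,x̂)/√π = 1`. -/
theorem sphere_heat_kernel_antipodal_asymptotics :
    Tendsto (fun t : ℝ => t ^ ((3:ℝ)/2) * Real.exp (π ^ 2 / (4 * t)) *
        ∑' n : ℤ, (-1 : ℝ) ^ n * (2 * (n : ℝ) + 1) *
          Real.exp (-((n : ℝ) ^ 2 + (n : ℝ)) * t))
      (nhdsWithin 0 (Ioi 0)) (nhds (2 * π ^ ((3 : ℝ) / 2))) ∧
    Tendsto (fun t : ℝ => 4 * t ^ ((3:ℝ)/2) * Real.exp (π ^ 2 / (4 * t)) *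
        ((1 / (8 * π)) * ∑' n : ℤ, (-1 : ℝ) ^ n * (2 * (n : ℝ) + 1) *
          Real.exp (-((n : ℝ) ^ 2 + (n : ℝ)) * t)) / Real.sqrt π)
      (nhdsWithin 0 (Ioi 0)) (nhds 1) := by
  refine ⟨tendsto_tsum_antipodalTerm, ?_⟩
  have hpow : π ^ (3 / 2 : ℝ) = π * √π := by
    rw [sqrt_eq_rpow, ← rpow_one_add' pi_pos.le (by norm_num)]
    norm_num
  have hnormalized :=
    tendsto_tsum_antipodalTerm.const_mul (4 * (1 / (8 * π)) / √π)
  have hconst : 4 * (1 / (8 * π)) / √π * (2 * π ^ (3 / 2 : ℝ)) = 1 := by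
    rw [hpow]
    field_simp
    norm_num
  rw [hconst] at hnormalized
  refine hnormalized.congr fun t => ?_
  simp only [antipodalTerm]
  ring
end
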